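/- There exist compact Hausdorff spaces K and L, both separable and scattered and with empty third Cantor–Bendixson derivative, a continuous surjection θ : L → K, and a closed linear subspace X of C(L) such that: (i) C(L) is the internal direct sum of θ°[C(K)] and X, where θ° : C(K) → C(L) is the isometric embedding θ°(g) = g ∘ θ; (ii) there exist bounded linear projections of norm 1 from C(L) onto θ°[C(K)] and from C(L) onto X; (iii) X is not a C-space. -/

import Mathlib

/-- A Banach space is a *C-space* if it is isomorphic (as a topological vector space,
via a continuous linear equivalence) to the space `C(K, ℝ)` of continuous real-valued
functions on some compact Hausdorff space `K`, with the supremum norm. -/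
def IsCSpace (X : Type*) [NormedAddCommGroup X] [NormedSpace ℝ X] : Prop :=
  ∃ (K : Type) (_ : TopologicalSpace K) (_ : CompactSpace K) (_ : T2Space K),
    Nonempty (X ≃L[ℝ] C(K, ℝ))

/-- A topological space is scattered if every nonempty subset has a point isolated in it. -/
def IsScatteredSpace (K : Type*) [TopologicalSpace K] : Prop :=
  ∀ S : Set K, S.Nonempty → ∃ x ∈ S, ∃ U : Set K, IsOpen U ∧ U ∩ S = {x}

/-!
Let `h ξ` be `{-1, 0, 1}`-valued functions on `ℕ` with infinite, almost disjoint supports, and let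
`X` be the closed span of the `h ξ` and of the unit vectors in `ℓ∞`. Doubling every point of the
Mrówka space of the supports, with the two copies of `h ξ` glued to the points where it is `1` and
`-1`, gives a compact space `L` with an involution `σ` such that `X` is the space of odd functions
on `L`. Then `K = L / σ`, and `(1 ± σ°) / 2` are the two projections.

If `X` were isomorphic to `C(K')`, the functionals `Λ n` obtained by evaluation at points where the
image of the `n`-th unit vector is large would have the following property, because `C(K')` is
closed under absolute values: for every `x` there is `y` with `Λ n y = |Λ n x|` for all `n`. On the
unit vectors the `Λ n` are given by a matrix `a` with uniformly summable rows, and their singular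
parts vanish at all but countably many `h ξ`. There are only continuum many such matrices, so the
`h ξ` can be chosen by a transfinite recursion in which every matrix is treated at uncountably many
stages, and at one of these `x = h ξ` has no such `y`. By Rosenthal's lemma, `h ξ` can be chosen so
that `|Λ n x|`, even minus any multiple of `Λ n x`, oscillates along pairs of rows whose difference
tends to zero coordinatewise. Along an ultrafilter, differences of rows charge only countably many
members of an almost disjoint family, so the later `h η` can be chosen not to compensate for the
oscillation; the earlier ones are fewer than continuum many, and each of their combinations fails
to compensate for it for all but countably many choices of the support of `h ξ`.
-/

open Filter Topology

universe u

section Pairing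

variable {N S : Type*} {a b x y : N → ℝ} {A B : Set N} {C : ℝ}

/-- The mass that the absolutely summable sequence `a`, viewed as a signed measure, gives to `A`. -/
noncomputable def absMass (a : N → ℝ) (A : Set N) : ℝ := ∑' m : A, |a m|

/-- The duality pairing of an absolutely summable sequence with a bounded one. -/
noncomputable def pairing (a x : N → ℝ) : ℝ := ∑' m, a m * x m

theorem absMass_nonneg (a : N → ℝ) (A : Set N) : 0 ≤ absMass a A :=
  tsum_nonneg fun _ => abs_nonneg _

theorem absMass_coe_finset (a : N → ℝ) (E : Finset N) : absMass a E = ∑ m ∈ E, |a m| :=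
  E.tsum_subtype' fun m => |a m|

theorem absMass_le_tsum (ha : Summable a) (A : Set N) : absMass a A ≤ ∑' m, |a m| :=
  ha.abs.tsum_subtype_le _ A fun _ => abs_nonneg _

theorem absMass_mono (ha : Summable a) (h : A ⊆ B) : absMass a A ≤ absMass a B := by
  rw [absMass, absMass, tsum_subtype A fun m => |a m|, tsum_subtype B fun m => |a m|]
  exact (ha.abs.indicator A).tsum_le_tsum
    (Set.indicator_le_indicator_of_subset h fun _ => abs_nonneg _) (ha.abs.indicator B)

theorem absMass_union_of_disjoint (ha : Summable a) (h : Disjoint A B) :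
    absMass a (A ∪ B) = absMass a A + absMass a B :=
  (ha.abs.subtype A).tsum_union_disjoint h (ha.abs.subtype B)

theorem absMass_union_le (ha : Summable a) (A B : Set N) :
    absMass a (A ∪ B) ≤ absMass a A + absMass a B := by
  rw [← Set.union_sdiff_self, absMass_union_of_disjoint ha disjoint_sdiff_self_right]
  gcongr
  exact absMass_mono ha Set.sdiff_subset

theorem absMass_biUnion_le (ha : Summable a) (R : S → Set N) (G : Finset S) :
    absMass a (⋃ s ∈ G, R s) ≤ ∑ s ∈ G, absMass a (R s) := by
  classical
  induction G using Finset.induction_on with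
  | empty => simp [absMass]
  | insert s G hs ih =>
    rw [Finset.set_biUnion_insert, Finset.sum_insert hs]
    exact (absMass_union_le ha _ _).trans (by gcongr)

theorem sum_absMass_le_tsum (ha : Summable a) {R : S → Set N} {G : Finset S}
    (h : (G : Set S).PairwiseDisjoint R) : ∑ s ∈ G, absMass a (R s) ≤ ∑' m, |a m| := by
  have := Summable.tsum_finset_bUnion_disjoint h fun s _ => ha.abs.subtype (R s)
  exact this.symm.trans_le (absMass_le_tsum ha _)

theorem summable_mul_of_abs_le (ha : Summable a) (hx : ∀ m, |x m| ≤ C) :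
    Summable fun m => a m * x m := by
  refine .of_norm_bounded (ha.abs.mul_right C) fun m => ?_
  rw [Real.norm_eq_abs, abs_mul]
  exact mul_le_mul_of_nonneg_left (hx m) (abs_nonneg _)

theorem abs_pairing_le (ha : Summable a) (hx : ∀ m, |x m| ≤ C)
    (hA : Function.support x ⊆ A) : |pairing a x| ≤ C * absMass a A := by
  rw [absMass, tsum_subtype A fun m => |a m|, ← tsum_mul_left, pairing, ← Real.norm_eq_abs]
  refine tsum_of_norm_bounded ((ha.abs.indicator A).mul_left C).hasSum fun m => ?_
  rw [Real.norm_eq_abs, abs_mul, mul_comm C]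
  by_cases hm : m ∈ A
  · rw [Set.indicator_of_mem hm]
    exact mul_le_mul_of_nonneg_left (hx m) (abs_nonneg _)
  · simp [Function.notMem_support.1 fun h => hm (hA h), hm]

theorem pairing_add_right (ha : Summable a) (hx : ∀ m, |x m| ≤ C) {D : ℝ}
    (hy : ∀ m, |y m| ≤ D) : pairing a (x + y) = pairing a x + pairing a y := by
  simp only [pairing, Pi.add_apply, mul_add]
  exact (summable_mul_of_abs_le ha hx).tsum_add (summable_mul_of_abs_le ha hy)

theorem pairing_const_mul (a x : N → ℝ) (c : ℝ) :
    pairing a (fun m => c * x m) = c * pairing a x := by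
  simp only [pairing, mul_left_comm, tsum_mul_left]

theorem pairing_sum_right (ha : Summable a) {x : S → N → ℝ} (hx : ∀ s m, |x s m| ≤ C)
    (G : Finset S) (c : S → ℝ) :
    pairing a (fun m => ∑ s ∈ G, c s * x s m) = ∑ s ∈ G, c s * pairing a (x s) := by
  simp only [← pairing_const_mul]
  simp only [pairing, Finset.mul_sum]
  refine Summable.tsum_finsetSum (f := fun s m => a m * (c s * x s m)) fun s _ => ?_
  simpa only [mul_left_comm] using (summable_mul_of_abs_le ha (hx s)).mul_left (c s)

theorem pairing_sub_left (ha : Summable a) (hb : Summable b) (hx : ∀ m, |x m| ≤ C) :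
    pairing (a - b) x = pairing a x - pairing b x := by
  simp only [pairing, Pi.sub_apply, sub_mul]
  exact (summable_mul_of_abs_le ha hx).tsum_sub (summable_mul_of_abs_le hb hx)

theorem abs_pairing_sub_mul_le (ha : Summable a) (hx : ∀ m, |x m| ≤ C)
    (hA : Function.support x ⊆ A) (n : N) :
    |pairing a x - a n * x n| ≤ C * absMass a (A \ {n}) := by
  classical
  have hsplit : pairing a x - a n * x n = pairing a (Function.update x n 0) := by
    rw [pairing, pairing, (summable_mul_of_abs_le ha hx).tsum_eq_add_tsum_ite n,
      add_sub_cancel_left]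
    exact tsum_congr fun m => by rcases eq_or_ne m n with rfl | hm <;> simp [*]
  rw [hsplit]
  refine abs_pairing_le ha (fun m => ?_) fun m hm => ?_
  · rcases eq_or_ne m n with rfl | hm
    · simpa using (abs_nonneg _).trans (hx m)
    · simpa [hm] using hx m
  · rcases eq_or_ne m n with rfl | hmn
    · simp at hm
    · rw [Function.mem_support, Function.update_of_ne hmn] at hm
      exact ⟨hA hm, hmn⟩

end Pairing

section AlmostDisjoint

variable {N S T : Type*} {R : S → Set N}

/-- A family of sets is *almost disjoint* if any two of its members have finite intersection. -/
def IsAlmostDisjoint (R : S → Set N) : Prop :=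
  Pairwise fun s t => (R s ∩ R t).Finite

theorem IsAlmostDisjoint.comp_injective (hR : IsAlmostDisjoint R) {f : T → S}
    (hf : Function.Injective f) : IsAlmostDisjoint (R ∘ f) :=
  fun _ _ hst => hR (hf.ne hst)

theorem IsAlmostDisjoint.mono {Q : S → Set N} (hR : IsAlmostDisjoint R) (h : ∀ s, Q s ⊆ R s) :
    IsAlmostDisjoint Q :=
  fun s t hst => (hR hst).subset (Set.inter_subset_inter (h s) (h t))

theorem IsAlmostDisjoint.exists_pairwiseDisjoint_sdiff (hR : IsAlmostDisjoint R) (G : Finset S) :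
    ∃ E : Finset N, (G : Set S).PairwiseDisjoint fun s => R s \ E := by
  classical
  have hE : (⋃ p ∈ G.offDiag, R p.1 ∩ R p.2).Finite :=
    G.offDiag.finite_toSet.biUnion fun p hp => hR (Finset.mem_offDiag.1 hp).2.2
  refine ⟨hE.toFinset, fun s hs t ht hst => Set.disjoint_left.2 fun m hms hmt => hms.2 ?_⟩
  rw [Set.Finite.coe_toFinset]
  exact Set.mem_biUnion (x := (s, t)) (Finset.mem_offDiag.2 ⟨hs, ht, hst⟩) ⟨hms.1, hmt.1⟩

theorem exists_isAlmostDisjoint_nat_bool :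
    ∃ R : (ℕ → Bool) → Set ℕ, (∀ s, (R s).Infinite) ∧ IsAlmostDisjoint R := by
  -- `R s` is the branch of `s` in the binary tree, i.e. the set of its initial segments.
  let code (s : ℕ → Bool) (n : ℕ) : ℕ := Encodable.encode (List.ofFn fun i : Fin n => s i)
  have code_eq {s t : ℕ → Bool} {n k : ℕ} (h : code s n = code t k) :
      n = k ∧ ∀ i < n, s i = t i := by
    have hlist := Encodable.encode_injective h
    obtain rfl : n = k := by simpa using congrArg List.length hlist
    exact ⟨rfl, fun i hi => congrFun (List.ofFn_injective hlist) ⟨i, hi⟩⟩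
  refine ⟨fun s => Set.range (code s),
    fun s => Set.infinite_range_of_injective fun n k h => (code_eq h).1, fun s t hst => ?_⟩
  obtain ⟨i, hi⟩ := Function.ne_iff.1 hst
  refine ((Set.finite_Iic i).image (code s)).subset ?_
  rintro _ ⟨⟨n, rfl⟩, k, hk⟩
  refine ⟨n, Set.mem_Iic.2 (not_lt.1 fun hn => hi ?_), rfl⟩
  obtain ⟨rfl, hagree⟩ := code_eq hk
  exact (hagree i hn).symm

end AlmostDisjoint

section Rosenthal

variable {N : Type*} {a : N → N → ℝ} {R : Set N} {M ε : ℝ}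

/-- Kupka's argument: if every cell of a partition of `R` into infinitely many infinite cells
contained a row with large mass on its own cell, picking one such row in each cell would leave an
infinite set on which the masses have dropped by `ε`. -/
theorem exists_absMass_sdiff_le_of_le_mul (hs : ∀ n, Summable (a n)) (hε : 0 < ε) (k : ℕ)
    (hR : R.Infinite) (hk : ∀ n ∈ R, absMass (a n) (R \ {n}) ≤ k * ε) :
    ∃ T ⊆ R, T.Infinite ∧ ∀ n ∈ T, absMass (a n) (T \ {n}) ≤ ε := by
  induction k generalizing R with
  | zero => exact ⟨R, subset_rfl, hR, fun n hn => (hk n hn).trans (by simpa using hε.le)⟩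
  | succ k ih =>
    let e : ℕ × ℕ ↪ R := Nat.pairEquiv.toEmbedding.trans hR.natEmbedding
    let P (p : ℕ) : Set N := Set.range fun q => (e (p, q) : N)
    have hPR (p) : P p ⊆ R := Set.range_subset_iff.2 fun q => (e (p, q)).2
    have hP (p) : (P p).Infinite := Set.infinite_range_of_injective fun q q' h => by
      simpa using e.injective (Subtype.ext h)
    by_cases hgood : ∃ p, ∀ n ∈ P p, absMass (a n) (P p \ {n}) ≤ ε
    · obtain ⟨p, hp⟩ := hgood
      exact ⟨P p, hPR p, hP p, hp⟩
    push Not at hgood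
    choose g hgP hg using hgood
    have hdisj {p p' : ℕ} {n : N} (h : n ∈ P p) (h' : n ∈ P p') : p = p' := by
      obtain ⟨⟨q, rfl⟩, q', hq'⟩ := And.intro h h'
      exact (Prod.ext_iff.1 (e.injective (Subtype.ext hq'))).1.symm
    have hginj : Function.Injective g := fun p p' h => hdisj (hgP p) (h ▸ hgP p')
    have hgR : Set.range g ⊆ R := Set.range_subset_iff.2 fun p => hPR p (hgP p)
    obtain ⟨T, hT, hTinf, hTε⟩ := ih (Set.infinite_range_of_injective hginj) <| by
      rintro _ ⟨p, rfl⟩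
      have hsep : Disjoint (P p \ {g p}) (Set.range g \ {g p}) := by
        refine Set.disjoint_left.2 ?_
        rintro _ ⟨hp, hne⟩ ⟨⟨p', rfl⟩, -⟩
        exact hne (congrArg g (hdisj hp (hgP p')).symm)
      have hunion : (P p \ {g p}) ∪ (Set.range g \ {g p}) ⊆ R \ {g p} :=
        Set.union_subset (Set.sdiff_subset_sdiff_left (hPR p)) (Set.sdiff_subset_sdiff_left hgR)
      have := (absMass_union_of_disjoint (hs _) hsep).symm.trans_le
        ((absMass_mono (hs _) hunion).trans (hk (g p) (hPR p (hgP p))))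
      push_cast at this
      linarith [hg p]
    exact ⟨T, hT.trans hgR, hTinf, hTε⟩

/-- Rosenthal's lemma. -/
theorem exists_absMass_sdiff_le (hs : ∀ n, Summable (a n)) (hM : ∀ n, ∑' m, |a n m| ≤ M)
    (hε : 0 < ε) (hR : R.Infinite) :
    ∃ T ⊆ R, T.Infinite ∧ ∀ n ∈ T, absMass (a n) (T \ {n}) ≤ ε := by
  obtain ⟨k, hk⟩ := exists_nat_ge (M / ε)
  exact exists_absMass_sdiff_le_of_le_mul hs hε k hR fun n _ =>
    (absMass_le_tsum (hs n) _).trans ((hM n).trans ((div_le_iff₀ hε).1 hk))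

theorem exists_tendsto_cofinite_inf_principal [Countable N] (hs : ∀ n, Summable (a n))
    (hM : ∀ n, ∑' m, |a n m| ≤ M) (hR : R.Infinite) :
    ∃ T ⊆ R, T.Infinite ∧
      ∃ c : N → ℝ, ∀ m, Tendsto (fun n => a n m) (cofinite ⊓ 𝓟 T) (𝓝 (c m)) := by
  have hmem (n) : a n ∈ Set.univ.pi fun _ => Set.Icc (-M) M := fun m _ =>
    abs_le.1 (((hs n).abs.le_tsum m fun _ _ => abs_nonneg _).trans (hM n))
  obtain ⟨c, -, φ, hφ, hc⟩ := (isCompact_univ_pi fun _ : N => isCompact_Icc).tendsto_subseq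
    fun k : ℕ => hmem (hR.natEmbedding R k)
  let g (k : ℕ) : N := hR.natEmbedding R (φ k)
  have hg : Function.Injective g :=
    Subtype.val_injective.comp ((hR.natEmbedding R).injective.comp hφ.injective)
  refine ⟨Set.range g, Set.range_subset_iff.2 fun k => (hR.natEmbedding R (φ k)).2,
    Set.infinite_range_of_injective hg, c, fun m => ?_⟩
  rw [← map_comap, hg.comap_cofinite_eq, Nat.cofinite_eq_atTop, tendsto_map'_iff]
  exact tendsto_pi_nhds.1 hc m

end Rosenthal

section Oscillation

variable {N : Type*} {a : N → N → ℝ} {δ t : ℝ}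

/-- Matrices with uniformly absolutely summable rows and with diagonal entries at least `1` in
absolute value. After rescaling, evaluating an isomorphism onto a `C(K)`-space at points where the
images of the unit vectors are large produces such matrices. -/
structure IsAdmissible (a : N → N → ℝ) : Prop where
  summable (n : N) : Summable (a n)
  exists_tsum_abs_le : ∃ M, ∀ n, ∑' m, |a n m| ≤ M
  one_le_abs_diag (n : N) : 1 ≤ |a n n|

/-- The filter of pairs of rows of the matrix `a` whose difference tends to zero in every
coordinate. -/
def rowPairFilter (a : N → N → ℝ) : Filter (N × N) :=
  comap (fun j => a j.1 - a j.2) (𝓝 0)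

/-- The function `g` on the set of rows of `a` *oscillates* by `δ` if it differs by at least `δ` on
pairs of rows whose difference is coordinatewise arbitrarily small. -/
def Oscillates (a : N → N → ℝ) (δ : ℝ) (g : N → ℝ) : Prop :=
  ∃ᶠ j in rowPairFilter a, δ ≤ |g j.1 - g j.2|

/-- The absolute value, tilted by a linear function of slope `t`. -/
def tiltedAbs (t x : ℝ) : ℝ := |x| - t * x

/-- The sign function `h` *oscillates* along the rows of `a` if the absolute values of its pairings
do so by `1 / 2`, even after subtracting any multiple of the pairings. -/
def IsOscillating (a : N → N → ℝ) (h : N → SignType) : Prop :=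
  ∀ t, Oscillates a (1 / 2) fun n => tiltedAbs t (pairing (a n) (h ·))

theorem abs_signType_cast_le_one (σ : SignType) : |(σ : ℝ)| ≤ 1 := by
  cases σ <;> simp

theorem signType_cast_mul_sign_mul_self (σ : SignType) (x : ℝ) :
    x * ((σ * SignType.sign x : SignType) : ℝ) = σ * |x| := by
  rw [SignType.coe_mul, ← self_mul_sign]
  ring

theorem half_le_abs_tiltedAbs_sub {P Q d : ℝ} {σ : SignType} (hσ : σ ≠ 0) (hd : 1 ≤ d)
    (hP : |P - σ * d| ≤ 1 / 4) (hQ : |Q| ≤ 1 / 4) (ht : t * σ ≤ 0) :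
    1 / 2 ≤ |tiltedAbs t P - tiltedAbs t Q| := by
  have hσ_abs : |(σ : ℝ)| = 1 := by cases σ <;> simp_all
  have hP_abs : 3 / 4 ≤ |P| := by
    have : |σ * d| = d := by rw [abs_mul, hσ_abs, one_mul, abs_of_nonneg (by linarith)]
    linarith [abs_sub_abs_le_abs_sub (σ * d) P, abs_sub_comm P (σ * d)]
  have htP : t * P ≤ 0 := by
    obtain ⟨hP₁, hP₂⟩ := abs_le.1 hP
    obtain rfl | rfl : σ = 1 ∨ σ = -1 := by cases σ <;> simp_all
    · rw [SignType.coe_one] at hP₁ hP₂ ht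
      exact mul_nonpos_of_nonpos_of_nonneg (by linarith) (by linarith)
    · rw [SignType.coe_neg, SignType.coe_one] at hP₁ hP₂ ht
      exact mul_nonpos_of_nonneg_of_nonpos (by linarith) (by linarith)
  have htP_eq : |t| * |P| = -(t * P) := by rw [← abs_mul, abs_of_nonpos htP]
  have htQ : |t * Q| ≤ |t| * |P| := by
    rw [abs_mul]
    exact mul_le_mul_of_nonneg_left (by linarith) (abs_nonneg t)
  refine le_trans ?_ (le_abs_self _)
  unfold tiltedAbs
  linarith [neg_abs_le (t * Q)]

theorem abs_tiltedAbs_sub_le (t x y : ℝ) :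
    |tiltedAbs t x - tiltedAbs t y| ≤ (1 + |t|) * |x - y| := by
  calc |tiltedAbs t x - tiltedAbs t y| = |(|x| - |y| : ℝ) - t * (x - y)| := by
        unfold tiltedAbs; ring_nf
    _ ≤ |(|x| - |y| : ℝ)| + |t * (x - y)| := abs_sub _ _
    _ ≤ |x - y| + |t| * |x - y| := add_le_add (abs_abs_sub_abs_le x y) (abs_mul _ _).le
    _ = (1 + |t|) * |x - y| := by ring

theorem tendsto_of_le_rowPairFilter {l : Filter (N × N)} (hl : l ≤ rowPairFilter a) (m : N) :
    Tendsto (fun j => (a j.1 - a j.2) m) l (𝓝 0) :=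
  tendsto_pi_nhds.1 (tendsto_iff_comap.2 hl) m

theorem prod_le_rowPairFilter {l : Filter N} {c : N → ℝ} (hc : Tendsto a l (𝓝 c)) :
    l ×ˢ l ≤ rowPairFilter a := by
  refine tendsto_iff_comap.1 ?_
  simpa using (hc.comp tendsto_fst).sub (hc.comp tendsto_snd)

theorem IsAdmissible.summable_sub (ha : IsAdmissible a) (n k : N) : Summable (a n - a k) :=
  (ha.summable n).sub (ha.summable k)

theorem IsAdmissible.exists_tsum_abs_sub_le (ha : IsAdmissible a) :
    ∃ M, ∀ n k, ∑' m, |(a n - a k) m| ≤ M := by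
  obtain ⟨M, hM⟩ := ha.exists_tsum_abs_le
  refine ⟨M + M, fun n k => ?_⟩
  have hn := (ha.summable n).abs
  have hk := (ha.summable k).abs
  calc ∑' m, |(a n - a k) m| ≤ ∑' m, (|a n m| + |a k m|) :=
        (ha.summable_sub n k).abs.tsum_le_tsum (fun m => abs_sub _ _) (hn.add hk)
    _ ≤ M + M := (hn.tsum_add hk).trans_le (add_le_add (hM n) (hM k))

theorem IsAdmissible.exists_almost_diagonal [Countable N] (ha : IsAdmissible a) {R : Set N}
    (hR : R.Infinite) (hδ : 0 < δ) :
    ∃ T ⊆ R, T.Infinite ∧ (∀ n ∈ T, absMass (a n) (T \ {n}) ≤ δ) ∧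
      ∃ c, Tendsto a (cofinite ⊓ 𝓟 T) (𝓝 c) := by
  obtain ⟨M, hM⟩ := ha.exists_tsum_abs_le
  obtain ⟨T, hTR, hT, c, hc⟩ := exists_tendsto_cofinite_inf_principal ha.summable hM hR
  obtain ⟨Q, hQT, hQ, hδQ⟩ := exists_absMass_sdiff_le ha.summable hM hδ hT
  refine ⟨Q, hQT.trans hTR, hQ, hδQ, c, (tendsto_pi_nhds.2 hc).mono_left ?_⟩
  gcongr

theorem abs_pairing_sub_sign_mul_le {T : Set N} {n : N} {h : N → SignType} {σ : SignType}
    (hn : Summable (a n)) (hsupp : h.support ⊆ T) (hoff : absMass (a n) (T \ {n}) ≤ δ)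
    (hσ : h n = σ * SignType.sign (a n n)) :
    |pairing (a n) (h ·) - σ * (|a n n|)| ≤ δ := by
  rw [← signType_cast_mul_sign_mul_self, ← hσ]
  refine (abs_pairing_sub_mul_le hn (fun m => abs_signType_cast_le_one (h m)) (A := T)
    (fun m hm => hsupp fun h0 => hm (by simp [h0])) n).trans ?_
  rwa [one_mul]

theorem exists_signs_on_infinite_set (s : N → SignType) {T : Set N} (hT : T.Infinite) :
    ∃ (ν : ℕ × SignType → N) (h : N → SignType), Function.Injective ν ∧ (∀ x, ν x ∈ T) ∧
      h.support ⊆ T ∧ ∀ x, h (ν x) = x.2 * s (ν x) := by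
  have e : ℕ × SignType ↪ T :=
    (nonempty_equiv_of_countable (α := ℕ × SignType) (β := ℕ)).some.toEmbedding.trans
      hT.natEmbedding
  have hν : Function.Injective fun x => (e x : N) := Subtype.val_injective.comp e.injective
  refine ⟨fun x => e x, Function.extend (fun x => (e x : N)) (fun x => x.2 * s (e x)) 0, hν,
    fun x => (e x).2, fun m hm => ?_, hν.extend_apply _ _⟩
  by_contra hmT
  exact hm (Function.extend_apply' _ _ _ fun ⟨x, hx⟩ => hmT (hx ▸ (e x).2))

/-- On an almost diagonal set of rows the pairing with a sign function is close to the value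
prescribed on the diagonal; prescribing each of `1`, `0`, `-1` infinitely often yields oscillation
against every slope. -/
theorem IsAdmissible.exists_isOscillating [Countable N] (ha : IsAdmissible a) {R : Set N}
    (hR : R.Infinite) :
    ∃ h : N → SignType, h.support ⊆ R ∧ h.support.Infinite ∧ IsOscillating a h := by
  obtain ⟨T, hTR, hT, hoff, c, hc⟩ := ha.exists_almost_diagonal hR (δ := 1 / 4) (by norm_num)
  obtain ⟨ν, h, hν, hνT, hsupp, hval⟩ :=
    exists_signs_on_infinite_set (fun n => SignType.sign (a n n)) hT
  have happrox (x) := abs_pairing_sub_sign_mul_le (ha.summable _) hsupp (hoff _ (hνT x)) (hval x)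
  have hinj (σ : SignType) : Function.Injective fun k : ℕ => ν (k, σ) :=
    hν.comp (Prod.mk_left_injective σ)
  refine ⟨h, hsupp.trans hTR, (Set.infinite_range_of_injective (hinj 1)).mono ?_, fun t => ?_⟩
  · rintro _ ⟨k, rfl⟩
    have := ha.one_le_abs_diag (ν (k, 1))
    rw [Function.mem_support, hval, one_mul, sign_ne_zero]
    exact abs_pos.1 (by linarith)
  · have htendsto (σ : SignType) : Tendsto (fun k : ℕ => ν (k, σ)) atTop (cofinite ⊓ 𝓟 T) := by
      refine tendsto_inf.2 ⟨?_, tendsto_principal.2 (.of_forall fun k => hνT _)⟩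
      rw [← Nat.cofinite_eq_atTop]
      exact (hinj σ).tendsto_cofinite
    obtain ⟨σ, hσ, ht⟩ : ∃ σ : SignType, σ ≠ 0 ∧ t * σ ≤ 0 := by
      rcases le_total 0 t with ht | ht
      · exact ⟨-1, by decide, by simpa using ht⟩
      · exact ⟨1, by decide, by simpa using ht⟩
    have hpair := ((htendsto σ).prodMk (htendsto 0)).mono_right (prod_le_rowPairFilter hc)
    refine hpair.frequently (Frequently.of_forall fun k => ?_)
    exact half_le_abs_tiltedAbs_sub hσ (ha.one_le_abs_diag _) (happrox (k, σ))
      (by simpa using happrox (k, 0)) ht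

end Oscillation

section SmallMass

variable {J N S : Type*} {d : J → N → ℝ} {R : S → Set N} {M δ : ℝ}

theorem eventually_absMass_coe_finset_lt {l : Filter J} (h0 : ∀ m, Tendsto (d · m) l (𝓝 0))
    (E : Finset N) (hδ : 0 < δ) : ∀ᶠ j in l, absMass (d j) E < δ := by
  have : Tendsto (fun j => ∑ m ∈ E, |d j m|) l (𝓝 (∑ _ ∈ E, |(0 : ℝ)|)) :=
    tendsto_finsetSum _ fun m _ => (h0 m).abs
  simp only [absMass_coe_finset]
  exact this.eventually (gt_mem_nhds (by simpa using hδ))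

theorem card_mul_le_of_frequently_le_absMass {l : Filter J} (hs : ∀ j, Summable (d j))
    (hM : ∀ j, ∑' m, |d j m| ≤ M) (h0 : ∀ m, Tendsto (d · m) l (𝓝 0)) (hR : IsAlmostDisjoint R)
    (hδ : 0 < δ) {G : Finset S} (hG : ∃ᶠ j in l, ∀ s ∈ G, δ ≤ absMass (d j) (R s)) :
    G.card * (δ / 2) ≤ M := by
  obtain ⟨E, hE⟩ := hR.exists_pairwiseDisjoint_sdiff G
  obtain ⟨j, hGj, hEj⟩ :=
    (hG.and_eventually (eventually_absMass_coe_finset_lt h0 E (half_pos hδ))).exists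
  have hle (s) (hsG : s ∈ G) : δ / 2 ≤ absMass (d j) (R s \ E) := by
    have hsub : R s ⊆ (R s \ E) ∪ E := by rw [Set.sdiff_union_self]; exact Set.subset_union_left
    linarith [hGj s hsG, (absMass_mono (hs j) hsub).trans (absMass_union_le (hs j) _ _)]
  calc G.card * (δ / 2) = G.card • (δ / 2) := (nsmul_eq_mul _ _).symm
    _ ≤ ∑ s ∈ G, absMass (d j) (R s \ E) := G.card_nsmul_le_sum _ _ hle
    _ ≤ ∑' m, |d j m| := sum_absMass_le_tsum (hs j) hE
    _ ≤ M := hM j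

theorem finite_setOf_eventually_le_absMass {l : Filter J} [NeBot l] (hs : ∀ j, Summable (d j))
    (hM : ∀ j, ∑' m, |d j m| ≤ M) (h0 : ∀ m, Tendsto (d · m) l (𝓝 0)) (hR : IsAlmostDisjoint R)
    (hδ : 0 < δ) : {s | ∀ᶠ j in l, δ ≤ absMass (d j) (R s)}.Finite := by
  by_contra hinf
  obtain ⟨n, hn⟩ := exists_nat_gt (M / (δ / 2))
  obtain ⟨G, hG, rfl⟩ := Set.Infinite.exists_subset_card_eq hinf n
  have := card_mul_le_of_frequently_le_absMass hs hM h0 hR hδ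
    ((Finset.eventually_all G).2 fun s hsG => hG hsG).frequently
  exact hn.not_ge ((le_div_iff₀ (half_pos hδ)).2 this)

/-- An ultrafilter is needed here: then `δ ≤ absMass (d j) (R s)` holds eventually as soon as it
holds frequently. -/
theorem countable_setOf_not_tendsto_absMass (V : Ultrafilter J) (hs : ∀ j, Summable (d j))
    (hM : ∀ j, ∑' m, |d j m| ≤ M) (h0 : ∀ m, Tendsto (d · m) V (𝓝 0)) (hR : IsAlmostDisjoint R) :
    {s | ¬ Tendsto (fun j => absMass (d j) (R s)) V (𝓝 0)}.Countable := by
  refine (Set.countable_iUnion fun k : ℕ => (finite_setOf_eventually_le_absMass hs hM h0 hR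
    (Nat.one_div_pos_of_nat (n := k))).countable).mono fun s hs0 => ?_
  rw [Set.mem_ofPred_eq, Metric.tendsto_nhds] at hs0
  push Not at hs0
  obtain ⟨ε, hε, hfreq⟩ := hs0
  obtain ⟨k, hk⟩ := exists_nat_one_div_lt hε
  refine Set.mem_iUnion.2 ⟨k, ?_⟩
  rw [Set.mem_ofPred_eq]
  filter_upwards [hfreq] with j hj
  rw [Real.dist_0_eq_abs, abs_of_nonneg (absMass_nonneg _ _)] at hj
  exact hk.le.trans hj

theorem tendsto_pairing_zero {l : Filter J} (hs : ∀ j, Summable (d j))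
    (h0 : ∀ m, Tendsto (d · m) l (𝓝 0)) {G : Finset S}
    (hG : ∀ s ∈ G, Tendsto (fun j => absMass (d j) (R s)) l (𝓝 0)) {u : N → ℝ} {B : ℝ}
    (hu : ∀ m, |u m| ≤ B) (hfin : (u.support \ ⋃ s ∈ G, R s).Finite) :
    Tendsto (fun j => pairing (d j) u) l (𝓝 0) := by
  set E := hfin.toFinset with hE
  have hlim : Tendsto (fun j => B * (∑ m ∈ E, |d j m| + ∑ s ∈ G, absMass (d j) (R s))) l
      (𝓝 (B * (∑ _ ∈ E, |(0 : ℝ)| + ∑ _ ∈ G, 0))) :=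
    ((tendsto_finsetSum _ fun m _ => (h0 m).abs).add (tendsto_finsetSum _ hG)).const_mul B
  simp only [abs_zero, Finset.sum_const_zero, add_zero, mul_zero] at hlim
  refine squeeze_zero_norm (fun j => ?_) hlim
  rcases isEmpty_or_nonempty N with hN | ⟨⟨m₀⟩⟩
  · simp [pairing, absMass, E.eq_empty_of_isEmpty]
  have hB : 0 ≤ B := (abs_nonneg _).trans (hu m₀)
  have hsub : u.support ⊆ E ∪ ⋃ s ∈ G, R s := by
    rw [hE, Set.Finite.coe_toFinset, Set.sdiff_union_self]
    exact Set.subset_union_left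
  rw [Real.norm_eq_abs]
  refine (abs_pairing_le (hs j) hu hsub).trans (mul_le_mul_of_nonneg_left ?_ hB)
  rw [← absMass_coe_finset]
  exact (absMass_union_le (hs j) _ _).trans
    (add_le_add_right (absMass_biUnion_le (hs j) R G) _)

end SmallMass

section FarOff

variable {N S : Type*} {a : N → N → ℝ} {R : S → Set N} {g : N → ℝ}

theorem IsAdmissible.countable_setOf_not_tendsto_absMass (ha : IsAdmissible a)
    (hR : IsAlmostDisjoint R) {V : Ultrafilter (N × N)} (hV : V ≤ rowPairFilter a) :
    {s | ¬ Tendsto (fun j : N × N => absMass (a j.1 - a j.2) (R s)) V (𝓝 0)}.Countable := by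
  obtain ⟨M, hM⟩ := ha.exists_tsum_abs_sub_le
  exact _root_.countable_setOf_not_tendsto_absMass V (fun j => ha.summable_sub j.1 j.2)
    (fun j => hM j.1 j.2) (tendsto_of_le_rowPairFilter hV) hR

theorem Oscillates.exists_ultrafilter {δ : ℝ} (hg : Oscillates a δ g) :
    ∃ V : Ultrafilter (N × N), V ≤ rowPairFilter a ∧
      ∀ᶠ j in (V : Filter (N × N)), δ ≤ |g j.1 - g j.2| := by
  obtain ⟨V, hV⟩ := exists_ultrafilter_iff.2 (frequently_mem_iff_neBot.1 hg)
  exact ⟨V, hV.trans inf_le_left, le_principal_iff.1 (hV.trans inf_le_right)⟩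

theorem IsAdmissible.tendsto_pairing_sub (ha : IsAdmissible a) {l : Filter (N × N)}
    (hl : l ≤ rowPairFilter a) {G : Finset S}
    (hG : ∀ s ∈ G, Tendsto (fun j : N × N => absMass (a j.1 - a j.2) (R s)) l (𝓝 0)) {u : N → ℝ}
    {B : ℝ} (hu : ∀ m, |u m| ≤ B) (hfin : (u.support \ ⋃ s ∈ G, R s).Finite) :
    Tendsto (fun j : N × N => pairing (a j.1) u - pairing (a j.2) u) l (𝓝 0) := by
  refine (tendsto_pairing_zero (fun j : N × N => ha.summable_sub j.1 j.2)
    (tendsto_of_le_rowPairFilter hl) hG hu hfin).congr fun j => ?_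
  exact pairing_sub_left (ha.summable _) (ha.summable _) hu

/-- Fix an exceptional `s₀` and an ultrafilter of pairs of rows along which the tilted absolute
values for `s₀` oscillate, and so `w` does as well. Along it, for all but countably many `s`, the
pairings with `h s` do not vary, and cannot cancel the oscillation of `w`. -/
theorem IsAdmissible.countable_setOf_not_oscillates_sub (ha : IsAdmissible a)
    (hR : IsAlmostDisjoint R) {h : S → N → SignType} (hsupp : ∀ s, (h s).support ⊆ R s)
    (hosc : ∀ s, IsOscillating a (h s)) (t : ℝ) (w : N → ℝ) :
    {s | ¬ Oscillates a (1 / 10)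
      fun n => tiltedAbs t (pairing (a n) (h s ·)) - w n}.Countable := by
  rcases Set.eq_empty_or_nonempty {s | ¬ Oscillates a (1 / 10)
      fun n => tiltedAbs t (pairing (a n) (h s ·)) - w n} with hempty | ⟨s₀, hs₀⟩
  · exact hempty ▸ Set.countable_empty
  obtain ⟨V, hVle, hV⟩ := (hosc s₀ t).exists_ultrafilter
  refine (ha.countable_setOf_not_tendsto_absMass hR hVle).mono fun s hs => ?_
  rw [Set.mem_ofPred_eq]
  intro hs_tendsto
  have hpair : Tendsto (fun j : N × N => pairing (a j.1) (h s ·) - pairing (a j.2) (h s ·)) V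
      (𝓝 0) := by
    refine ha.tendsto_pairing_sub hVle (G := {s}) (by simpa using hs_tendsto)
      (fun m => abs_signType_cast_le_one (h s m)) ?_
    rw [Set.sdiff_eq_empty.2]
    · exact Set.finite_empty
    · intro m hm
      simpa using hsupp s fun h0 => hm (by simp [h0])
  have htilt : Tendsto (fun j : N × N => tiltedAbs t (pairing (a j.1) (h s ·)) -
      tiltedAbs t (pairing (a j.2) (h s ·))) V (𝓝 0) :=
    squeeze_zero_norm (fun j => abs_tiltedAbs_sub_le t _ _)
      (by simpa using hpair.abs.const_mul (1 + |t|))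
  obtain ⟨j, hj, hj₀, hjs, hjt⟩ := (hV.and (((not_frequently.1 hs₀).filter_mono hVle).and
    (((not_frequently.1 hs).filter_mono hVle).and
    (htilt.abs.eventually (gt_mem_nhds (show |(0 : ℝ)| < 1 / 10 by norm_num)))))).exists
  rw [not_le, abs_lt] at hj₀ hjs
  rw [abs_lt] at hjt
  refine absurd hj (not_le.2 (abs_lt.2 ⟨?_, ?_⟩)) <;> linarith

/-- The function `g` on the rows of `a` is *far off* the pairings with bounded functions which, up
to finite sets, are supported by finitely many members of the family `R` with indices
outside `Φ`. -/
def IsFarOff (a : N → N → ℝ) (R : S → Set N) (Φ : Set S) (g : N → ℝ) : Prop :=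
  ∀ (u : N → ℝ) (B : ℝ) (G : Finset S), (∀ m, |u m| ≤ B) → (∀ s ∈ G, s ∉ Φ) →
    (u.support \ ⋃ s ∈ G, R s).Finite → ∃ n, 1 / 30 < |g n - pairing (a n) u|

theorem IsFarOff.mono {Φ Ψ : Set S} (h : IsFarOff a R Φ g) (hΦΨ : Φ ⊆ Ψ) : IsFarOff a R Ψ g :=
  fun u B G hu hG => h u B G hu fun s hs hsΦ => hG s hs (hΦΨ hsΦ)

theorem IsAdmissible.exists_countable_isFarOff (ha : IsAdmissible a) (hR : IsAlmostDisjoint R)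
    (hg : Oscillates a (1 / 10) g) : ∃ Φ : Set S, Φ.Countable ∧ IsFarOff a R Φ g := by
  obtain ⟨V, hVle, hV⟩ := hg.exists_ultrafilter
  refine ⟨_, ha.countable_setOf_not_tendsto_absMass hR hVle, fun u B G hu hG hfin => ?_⟩
  by_contra! hclose
  have hpair := (ha.tendsto_pairing_sub hVle (fun s hs => not_not.1 (hG s hs)) hu hfin).abs
  obtain ⟨j, hj, hju⟩ := (hV.and (hpair.eventually
    (gt_mem_nhds (show |(0 : ℝ)| < 1 / 30 by norm_num)))).exists
  have h₁ := abs_le.1 (hclose j.1)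
  have h₂ := abs_le.1 (hclose j.2)
  rw [abs_lt] at hju
  refine absurd hj (not_le.2 (abs_lt.2 ⟨?_, ?_⟩)) <;> linarith

end FarOff

section Cardinality

open Cardinal

theorem exists_notMem_of_mk_lt_continuum {S X : Type u} (hS : #S = 𝔠) (hX : #X < 𝔠)
    {C : X → Set S} (hC : ∀ x, (C x).Countable) {D : Set S} (hD : #D < 𝔠) :
    ∃ s ∉ D, ∀ x, s ∉ C x := by
  have hUnion : #(⋃ x, C x) < 𝔠 :=
    (mk_iUnion_le C).trans_lt <| mul_lt_of_lt aleph0_le_continuum hX <|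
      (ciSup_le' fun x => le_aleph0_iff_set_countable.2 (hC x)).trans_lt aleph0_lt_continuum
  by_contra! hcover
  have huniv : D ∪ ⋃ x, C x = Set.univ := Set.eq_univ_of_forall fun s =>
    or_iff_not_imp_left.2 fun hs => Set.mem_iUnion.2 (hcover s hs)
  refine (mk_union_le D (⋃ x, C x)).not_gt ?_
  rw [huniv, mk_univ, hS]
  exact add_lt_of_lt aleph0_le_continuum hD hUnion

theorem IsAdmissible.exists_forall_isFarOff {N S : Type} [Countable N] {a : N → N → ℝ}
    (ha : IsAdmissible a) (hS : #S = 𝔠) {R : S → Set N} (hinf : ∀ s, (R s).Infinite)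
    (hR : IsAlmostDisjoint R) {W : Set (N → ℝ)} (hW : #W < 𝔠) {D : Set S} (hD : #D < 𝔠) :
    ∃ s ∉ D, ∃ h : N → SignType, h.support ⊆ R s ∧ h.support.Infinite ∧
      ∃ Φ : Set S, #Φ ≤ max #W ℵ₀ ∧ ∀ w ∈ W, ∀ t : ℚ,
        IsFarOff a R Φ fun n => tiltedAbs t (pairing (a n) (h ·)) - w n := by
  choose h hsupp hsinf hosc using fun s => ha.exists_isOscillating (hinf s)
  have hcard : #(W × ℚ) ≤ max #W ℵ₀ := by
    rw [mk_prod, lift_id, lift_id, mk_eq_aleph0 ℚ]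
    exact mul_le_max_of_aleph0_le_right le_rfl
  obtain ⟨s, hsD, hs⟩ := exists_notMem_of_mk_lt_continuum hS
    (hcard.trans_lt (max_lt hW aleph0_lt_continuum))
    (fun x : W × ℚ => ha.countable_setOf_not_oscillates_sub hR hsupp hosc x.2 x.1) hD
  choose Φ hΦ hfar using fun x => ha.exists_countable_isFarOff hR (not_not.1 (hs x))
  refine ⟨s, hsD, h s, hsupp s, hsinf s, ⋃ x, Φ x, ?_, fun w hw t =>
    (hfar (⟨w, hw⟩, t)).mono (Set.subset_iUnion Φ _)⟩
  refine (mk_iUnion_le _).trans ((mul_le_mul' hcard (ciSup_le' fun x =>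
    le_aleph0_iff_set_countable.2 (hΦ x))).trans ?_)
  simp

end Cardinality

section Recursion

open Cardinal

theorem exists_forall_of_wellFoundedLT {I : Type*} [LT I] [WellFoundedLT I] {Y : I → Type*}
    (P : ∀ ξ, (∀ η < ξ, Y η) → Y ξ → Prop) (hP : ∀ ξ g, ∃ y, P ξ g y) :
    ∃ f : ∀ ξ, Y ξ, ∀ ξ, P ξ (fun η _ => f η) (f ξ) := by
  choose F hF using hP
  refine ⟨wellFounded_lt.fix F, fun ξ => ?_⟩
  rw [wellFounded_lt.fix_eq F ξ]
  exact hF ξ _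

theorem exists_uncountable_fibers {I D : Type} (hI : #I = 𝔠) (hD : #D ≤ 𝔠) [Nonempty D] :
    ∃ e : I → D, ∀ d, ∀ C : Set I, C.Countable → ∃ ξ ∉ C, e ξ = d := by
  have hcard : #(D × ℝ) ≤ #I := by
    rw [mk_prod, lift_id, lift_id, mk_real, hI]
    exact mul_le_of_le aleph0_le_continuum hD le_rfl
  obtain ⟨emb⟩ := hcard
  have hsurj := Function.invFun_surjective emb.injective
  refine ⟨fun ξ => (Function.invFun emb ξ).1, fun d C hC => ?_⟩
  by_contra! hfiber
  refine not_countable_real ((hC.image fun ξ => (Function.invFun emb ξ).2).mono fun x _ => ?_)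
  obtain ⟨ξ, hξ⟩ := hsurj (d, x)
  exact ⟨ξ, not_not.1 fun hξC => hfiber ξ hξC (by rw [hξ]), congrArg Prod.snd hξ⟩

theorem mk_span_rat_le {E : Type u} [AddCommGroup E] [Module ℚ E] (A : Set E) :
    #(Submodule.span ℚ A) ≤ max #A ℵ₀ := by
  rcases isEmpty_or_nonempty A with hA | hA
  · rw [Set.isEmpty_coe_sort.1 hA, Submodule.span_empty]
    exact (mk_le_one_iff_set_subsingleton.2 (by simp)).trans (by simp)
  · have hrange := Finsupp.range_linearCombination ℚ (v := (Subtype.val : A → E))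
    rw [Subtype.range_coe] at hrange
    rw [← hrange]
    refine (mk_range_le (f := Finsupp.linearCombination ℚ (Subtype.val : A → E))).trans ?_
    simp

/-- One stage of the construction of a family of sign functions: a sign function supported by the
member `R index`, and the indices which all later stages have to avoid. -/
structure Stage {N S : Type} (R : S → Set N) (κ : Cardinal) where
  index : S
  sign : N → SignType
  excluded : Set S
  support_subset : sign.support ⊆ R index
  infinite_support : sign.support.Infinite
  mk_excluded_le : #excluded ≤ κ

/-- The rational span of the pairings of the rows of `a` with the sign functions `h η` and of the
functions `b k`. Rational coefficients keep its cardinality small. -/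
noncomputable def pairingSpan {I N : Type*} (a : N → N → ℝ) (h : I → N → SignType) (b : ℕ → N → ℝ) :
    Submodule ℚ (N → ℝ) :=
  Submodule.span ℚ ((Set.range fun η n => pairing (a n) (h η ·)) ∪ Set.range b)

theorem mk_pairingSpan_le {I N : Type} (a : N → N → ℝ) (h : I → N → SignType) (b : ℕ → N → ℝ) :
    #(pairingSpan a h b) ≤ max #I ℵ₀ := by
  refine (mk_span_rat_le _).trans (max_le ((mk_union_le _ _).trans ?_) (le_max_right _ _))
  exact add_le_of_le (le_max_right _ _) (mk_range_le.trans (le_max_left _ _))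
    (mk_range_le.trans (by simp))

theorem abs_finsupp_apply_le_sum {N : Type*} (u : N →₀ ℝ) (m : N) :
    |u m| ≤ ∑ k ∈ u.support, |u k| := by
  by_cases hm : u m = 0
  · simpa [hm] using Finset.sum_nonneg fun _ _ => abs_nonneg _
  · exact Finset.single_le_sum (f := fun k => |u k|) (fun _ _ => abs_nonneg _) (by simpa using hm)

theorem support_add_sum_mul_sdiff_subset {I N S : Type*} [DecidableEq S] {R : S → Set N}
    {h : I → N → SignType} {s : I → S} (hh : ∀ ξ, (h ξ).support ⊆ R (s ξ)) (u : N →₀ ℝ)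
    (G : Finset I) (c : I → ℝ) :
    (⇑u + fun m => ∑ η ∈ G, c η * h η m).support \ ⋃ i ∈ G.image s, R i ⊆ u.support := by
  rintro m ⟨hm, hmR⟩
  contrapose! hm
  rw [Finset.mem_coe, Finsupp.notMem_support_iff] at hm
  rw [Function.notMem_support, Pi.add_apply, hm, zero_add]
  refine Finset.sum_eq_zero fun η hη => ?_
  by_contra h0
  refine hmR (Set.mem_iUnion₂.2 ⟨_, Finset.mem_image_of_mem s hη, hh η fun h1 => h0 ?_⟩)
  simp [h1]

section

variable {I N S : Type} [LinearOrder I] {R : S → Set N}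

theorem IsAdmissible.exists_stage [Countable N] {a : N → N → ℝ} (ha : IsAdmissible a)
    (hS : #S = 𝔠) (hinf : ∀ s, (R s).Infinite) (hR : IsAlmostDisjoint R) (b : ℕ → N → ℝ) {ξ : I}
    (hξ : #(Set.Iio ξ) < 𝔠) (g : ∀ η < ξ, Stage R (max #(Set.Iio η) ℵ₀)) :
    ∃ y : Stage R (max #(Set.Iio ξ) ℵ₀),
      (∀ η hη, y.index ≠ (g η hη).index ∧ y.index ∉ (g η hη).excluded) ∧
      ∀ w ∈ pairingSpan a (fun η : Set.Iio ξ => (g η η.2).sign) b, ∀ t : ℚ,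
        IsFarOff a R y.excluded fun n => tiltedAbs t (pairing (a n) (y.sign ·)) - w n := by
  have hmax : max #(Set.Iio ξ) ℵ₀ < 𝔠 := max_lt hξ aleph0_lt_continuum
  have hW := mk_pairingSpan_le a (fun η : Set.Iio ξ => (g η η.2).sign) b
  have hD : #(Set.range (fun η : Set.Iio ξ => (g η η.2).index) ∪
      ⋃ η : Set.Iio ξ, (g η η.2).excluded : Set S) < 𝔠 := by
    refine (mk_union_le _ _).trans_lt (add_lt_of_lt aleph0_le_continuum
      (mk_range_le.trans_lt hξ) ?_)
    refine (mk_iUnion_le _).trans_lt (mul_lt_of_lt aleph0_le_continuum hξ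
      ((ciSup_le' fun η : Set.Iio ξ => (g η η.2).mk_excluded_le.trans <|
      max_le_max (mk_le_mk_of_subset (Set.Iio_subset_Iio η.2.le)) le_rfl).trans_lt hmax))
  obtain ⟨s, hsD, h, hsupp, hsinf, Φ, hΦ, hfar⟩ :=
    ha.exists_forall_isFarOff hS hinf hR (hW.trans_lt hmax) hD
  rw [Set.mem_union, not_or, Set.mem_iUnion, not_exists] at hsD
  exact ⟨⟨s, h, Φ, hsupp, hsinf, hΦ.trans (max_le hW (le_max_right _ _))⟩,
    fun η hη => ⟨fun heq => hsD.1 ⟨⟨η, hη⟩, heq.symm⟩, hsD.2 ⟨η, hη⟩⟩, hfar⟩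

/-- A family of sign functions on members of `R` is *generic* for the matrices `a ξ` and the
sequences `b ξ` of functions if the tilted absolute values of the pairings with the `ξ`-th sign
function are far off the pairings with the later ones, up to errors taken from the span of `b ξ`
and of the pairings with the earlier ones. -/
structure IsGeneric (R : S → Set N) (a : I → N → N → ℝ) (b : I → ℕ → N → ℝ)
    (h : I → N → SignType) (s : I → S) (Φ : I → Set S) : Prop where
  support_subset (ξ : I) : (h ξ).support ⊆ R (s ξ)
  infinite_support (ξ : I) : (h ξ).support.Infinite
  index_ne {η ξ : I} : η < ξ → s ξ ≠ s η
  index_notMem {η ξ : I} : η < ξ → s ξ ∉ Φ η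
  isFarOff (ξ : I) {w : N → ℝ} (hw : w ∈ pairingSpan (a ξ) (fun η : Set.Iio ξ => h η) (b ξ))
    (t : ℚ) : IsFarOff (a ξ) R (Φ ξ) fun n => tiltedAbs t (pairing (a ξ n) (h ξ ·)) - w n

theorem exists_isGeneric [WellFoundedLT I] [Countable N] (hI : ∀ ξ : I, #(Set.Iio ξ) < 𝔠)
    (hS : #S = 𝔠) (hinf : ∀ s, (R s).Infinite) (hR : IsAlmostDisjoint R) {a : I → N → N → ℝ}
    (ha : ∀ ξ, IsAdmissible (a ξ)) (b : I → ℕ → N → ℝ) :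
    ∃ h s Φ, IsGeneric R a b h s Φ := by
  obtain ⟨f, hf⟩ := exists_forall_of_wellFoundedLT _ fun ξ (g : ∀ η < ξ, Stage R _) =>
    (ha ξ).exists_stage hS hinf hR (b ξ) (hI ξ) g
  exact ⟨fun ξ => (f ξ).sign, fun ξ => (f ξ).index, fun ξ => (f ξ).excluded,
    { support_subset := fun ξ => (f ξ).support_subset
      infinite_support := fun ξ => (f ξ).infinite_support
      index_ne := fun hηξ => ((hf _).1 _ hηξ).1
      index_notMem := fun hηξ => ((hf _).1 _ hηξ).2
      isFarOff := fun ξ w => (hf ξ).2 w }⟩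

variable {a : I → N → N → ℝ} {b : I → ℕ → N → ℝ} {h : I → N → SignType} {s : I → S}
  {Φ : I → Set S}

theorem IsGeneric.isAlmostDisjoint (hR : IsAlmostDisjoint R) (hh : IsGeneric R a b h s Φ) :
    IsAlmostDisjoint fun ξ => (h ξ).support := by
  have hs : Function.Injective s := fun ξ η heq => by
    by_contra hne
    rcases lt_or_gt_of_ne hne with hlt | hlt
    · exact hh.index_ne hlt heq.symm
    · exact hh.index_ne hlt heq
  exact (hR.comp_injective hs).mono hh.support_subset

theorem finsupp_sum_eq_sum_lt_add_add_sum_gt (t : I →₀ ℚ) (x : I → ℝ) (ξ : I) :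
    (t.sum fun η c => (c : ℝ) * x η) = (∑ η ∈ t.support with η < ξ, (t η : ℝ) * x η) +
      t ξ * x ξ + ∑ η ∈ t.support with ξ < η, (t η : ℝ) * x η := by
  have hξ : (t ξ : ℝ) * x ξ = ∑ η ∈ t.support with η = ξ, (t η : ℝ) * x η := by
    rw [Finset.sum_filter, Finset.sum_ite_eq']
    split_ifs with hmem
    · rfl
    · simp [Finsupp.notMem_support_iff.1 hmem]
  simp only [hξ, Finset.sum_filter, Finsupp.sum, ← Finset.sum_add_distrib]
  refine Finset.sum_congr rfl fun η _ => ?_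
  rcases lt_trichotomy η ξ with hlt | rfl | hlt
  · simp [hlt, hlt.ne, hlt.not_gt]
  · simp
  · simp [hlt, hlt.ne', hlt.not_gt]

/-- The earlier pairings are absorbed by the span, the `ξ`-th one by the slope, and the later ones
by the function that the tilted absolute values are far off from. -/
theorem IsGeneric.exists_lt_abs_sub (hh : IsGeneric R a b h s Φ) {ξ : I}
    (ha : ∀ n, Summable (a ξ n)) {β : I → N → ℝ} (hβ : ∀ η, β η ∈ Set.range (b ξ)) (u : N →₀ ℝ)
    (t : I →₀ ℚ) :
    ∃ n, 1 / 30 < |(|pairing (a ξ n) (h ξ ·)| - (pairing (a ξ n) u +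
      t.sum fun η c => (c : ℝ) * (pairing (a ξ n) (h η ·) + β η n)) : ℝ)| := by
  classical
  set later := t.support.filter (ξ < ·)
  set w : N → ℝ := (∑ η ∈ t.support with η < ξ, t η • fun n => pairing (a ξ n) (h η ·)) +
    ∑ η ∈ t.support, t η • β η with hw_def
  have hw : w ∈ pairingSpan (a ξ) (fun η : Set.Iio ξ => h η) (b ξ) := add_mem
    (sum_mem fun η hη => Submodule.smul_mem _ _ <| Submodule.subset_span <|
      .inl ⟨⟨η, (Finset.mem_filter.1 hη).2⟩, rfl⟩)
    (sum_mem fun η _ => Submodule.smul_mem _ _ <| Submodule.subset_span <| .inr (hβ η))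
  set x : N → ℝ := fun m => ∑ η ∈ later, (t η : ℝ) * h η m
  have hx (m : N) : |x m| ≤ ∑ η ∈ later, |(t η : ℝ)| :=
    (Finset.abs_sum_le_sum_abs _ _).trans <| Finset.sum_le_sum fun η _ => by
      rw [abs_mul]
      exact mul_le_of_le_one_right (abs_nonneg _) (abs_signType_cast_le_one _)
  obtain ⟨n, hn⟩ := hh.isFarOff ξ hw (t ξ) (⇑u + x) _ (later.image s)
    (fun m => (abs_add_le _ _).trans (add_le_add (abs_finsupp_apply_le_sum u m) (hx m)))
    (Finset.forall_mem_image.2 fun η hη => hh.index_notMem (Finset.mem_filter.1 hη).2)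
    (u.support.finite_toSet.subset (support_add_sum_mul_sdiff_subset hh.support_subset u later _))
  refine ⟨n, hn.trans_eq (congrArg abs ?_)⟩
  have hwn : w n = (∑ η ∈ t.support with η < ξ, (t η : ℝ) * pairing (a ξ n) (h η ·)) +
      t.sum fun η c => (c : ℝ) * β η n := by
    simp [hw_def, Rat.smul_def, Finsupp.sum]
  have hpair : pairing (a ξ n) x = ∑ η ∈ later, (t η : ℝ) * pairing (a ξ n) (h η ·) :=
    pairing_sum_right (ha n) (fun η m => abs_signType_cast_le_one (h η m)) later _
  have hsum := finsupp_sum_eq_sum_lt_add_add_sum_gt t (fun η => pairing (a ξ n) (h η ·)) ξ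
  simp only [mul_add, Finsupp.sum_add]
  rw [hsum, pairing_add_right (ha n) (abs_finsupp_apply_le_sum u) hx, hpair, hwn, tiltedAbs]
  ring

end

/-- A family of sign functions is *diagonalizing* if, for every admissible matrix `a` and every
perturbation `β` of countably many of the pairings of its rows with the sign functions, the absolute
values of some unperturbed pairing stay away from all combinations of the perturbed pairings and the
columns of `a`. -/
def IsDiagonalizing {I N : Type*} (h : I → N → SignType) : Prop :=
  ∀ (a : N → N → ℝ) (β : I → N → ℝ), IsAdmissible a → β.support.Countable →
    ∃ ξ, β ξ = 0 ∧ ∀ (u : N →₀ ℝ) (t : I →₀ ℚ), ∃ n, 1 / 30 <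
      |(|pairing (a n) (h ξ ·)| - (pairing (a n) u +
        t.sum fun η c => (c : ℝ) * (pairing (a n) (h η ·) + β η n)) : ℝ)|

theorem isAdmissible_single {N : Type*} [DecidableEq N] :
    IsAdmissible fun n : N => (Pi.single n 1 : N → ℝ) where
  summable n := (hasSum_pi_single n 1).summable
  exists_tsum_abs_le := by
    refine ⟨1, fun n => ?_⟩
    rw [tsum_eq_single n fun m hm => by simp [hm]]
    simp
  one_le_abs_diag n := by simp

theorem exists_isDiagonalizing :
    ∃ (I : Type) (h : I → ℕ → SignType), Infinite I ∧ (∀ ξ, (h ξ).support.Infinite) ∧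
      IsAlmostDisjoint (fun ξ => (h ξ).support) ∧ IsDiagonalizing h := by
  obtain ⟨R, hinf, hR⟩ := exists_isAlmostDisjoint_nat_bool
  have hI : #(continuum.ord).ToType = 𝔠 := mk_ord_toType 𝔠
  have hIio (ξ : (continuum.ord).ToType) : #(Set.Iio ξ) < 𝔠 :=
    (mk_Iio_lt ξ (by rw [hI, Ordinal.type_toType])).trans_eq hI
  have hseq : #(ℕ → ℕ → ℝ) = 𝔠 := by simp [mk_real, continuum_power_aleph0]
  have hpairs : #({a : ℕ → ℕ → ℝ // IsAdmissible a} × (ℕ → ℕ → ℝ)) ≤ 𝔠 := by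
    rw [mk_prod, lift_id, lift_id, hseq]
    exact mul_le_of_le aleph0_le_continuum ((mk_subtype_le _).trans hseq.le) le_rfl
  have : Nonempty ({a : ℕ → ℕ → ℝ // IsAdmissible a} × (ℕ → ℕ → ℝ)) :=
    ⟨⟨_, isAdmissible_single⟩, 0⟩
  obtain ⟨e, he⟩ := exists_uncountable_fibers hI hpairs
  obtain ⟨h, s, Φ, hh⟩ := exists_isGeneric hIio (by simp) hinf hR (fun ξ => (e ξ).1.2)
    fun ξ => (e ξ).2
  refine ⟨_, h, infinite_iff.2 (aleph0_le_continuum.trans_eq hI.symm), hh.infinite_support,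
    hh.isAlmostDisjoint hR, fun a β ha hβ => ?_⟩
  obtain ⟨b, hb⟩ := ((hβ.image β).insert 0).exists_eq_range (Set.insert_nonempty _ _)
  obtain ⟨ξ, hξ, heξ⟩ := he (⟨a, ha⟩, b) _ hβ
  refine ⟨ξ, Function.notMem_support.1 hξ, ?_⟩
  have hrange (η) : β η ∈ Set.range (e ξ).2 := by
    rw [heξ, ← hb]
    by_cases h0 : β η = 0
    · exact .inl h0
    · exact .inr ⟨η, h0, rfl⟩
  simpa only [heξ] using hh.exists_lt_abs_sub (e ξ).1.2.summable hrange

end Recursion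

section SequenceModel

theorem pairing_finsupp {N : Type*} (a : N → ℝ) (u : N →₀ ℝ) :
    pairing a u = u.sum fun m c => c * a m := by
  rw [pairing, tsum_eq_sum (s := u.support) fun m hm => by
    rw [Finsupp.notMem_support_iff.1 hm, mul_zero]]
  exact Finset.sum_congr rfl fun m _ => mul_comm _ _

theorem pairing_single {N : Type*} [DecidableEq N] (a : N → ℝ) (m : N) :
    pairing a (Pi.single m 1) = a m := by
  rw [pairing, tsum_eq_single m fun k hk => by simp [hk]]
  simp

theorem sum_abs_apply_le {ι E : Type*} [NormedAddCommGroup E] [NormedSpace ℝ E] (φ : E →L[ℝ] ℝ)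
    {v : ι → E} {G : Finset ι} {C : ℝ}
    (hC : ∀ σ : ι → SignType, ‖∑ i ∈ G, (σ i : ℝ) • v i‖ ≤ C) :
    ∑ i ∈ G, |φ (v i)| ≤ ‖φ‖ * C := by
  have hsum : ∑ i ∈ G, |φ (v i)| = φ (∑ i ∈ G, (SignType.sign (φ (v i)) : ℝ) • v i) := by
    simp only [map_sum, map_smul, smul_eq_mul, sign_mul_self]
  rw [hsum]
  exact (le_abs_self _).trans (φ.le_opNorm_of_le (hC _))

/-- Coordinates identifying the normed space `X` with the closed subspace of the bounded functions
on `N` which is spanned by the unit vectors and by the sign functions `h ξ`. -/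
structure SequenceModel {I N : Type*} [DecidableEq N] (h : I → N → SignType) (X : Type*)
    [NormedAddCommGroup X] [NormedSpace ℝ X] where
  coord : X →ₗ[ℝ] (N → ℝ)
  abs_coord_le (x : X) (m : N) : |coord x m| ≤ ‖x‖
  norm_le {x : X} {C : ℝ} (hC : 0 ≤ C) (hx : ∀ m, |coord x m| ≤ C) : ‖x‖ ≤ C
  unitVec : N → X
  coord_unitVec (m : N) : coord (unitVec m) = Pi.single m 1
  signVec : I → X
  coord_signVec (ξ : I) (m : N) : coord (signVec ξ) m = h ξ m
  exists_norm_sub_le (x : X) {ε : ℝ} (hε : 0 < ε) : ∃ (u : N →₀ ℝ) (t : I →₀ ℚ),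
    ‖x - ((u.sum fun m c => c • unitVec m) + t.sum fun ξ c => (c : ℝ) • signVec ξ)‖ ≤ ε

namespace SequenceModel

variable {I N X : Type*} [DecidableEq N] {h : I → N → SignType} [NormedAddCommGroup X]
  [NormedSpace ℝ X] (S : SequenceModel h X)

theorem coord_sum_smul_unitVec (G : Finset N) (c : N → ℝ) (n : N) :
    S.coord (∑ m ∈ G, c m • S.unitVec m) n = if n ∈ G then c n else 0 := by
  simp [map_sum, S.coord_unitVec, Finset.sum_apply, Pi.single_apply]

theorem sum_abs_apply_unitVec_le (φ : X →L[ℝ] ℝ) (G : Finset N) :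
    ∑ m ∈ G, |φ (S.unitVec m)| ≤ ‖φ‖ := by
  refine (sum_abs_apply_le φ fun σ => S.norm_le zero_le_one fun n => ?_).trans_eq (mul_one _)
  rw [S.coord_sum_smul_unitVec]
  split_ifs
  · exact abs_signType_cast_le_one _
  · simp

theorem summable_apply_unitVec (φ : X →L[ℝ] ℝ) : Summable fun m => φ (S.unitVec m) :=
  (summable_of_sum_le (fun _ => abs_nonneg _) (S.sum_abs_apply_unitVec_le φ)).of_abs

theorem tsum_abs_apply_unitVec_le (φ : X →L[ℝ] ℝ) : ∑' m, |φ (S.unitVec m)| ≤ ‖φ‖ :=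
  Real.tsum_le_of_sum_le (fun _ => abs_nonneg _) (S.sum_abs_apply_unitVec_le φ)

/-- The part of a functional which is determined by its values at the unit vectors. -/
noncomputable def regularPart (φ : X →L[ℝ] ℝ) : X →L[ℝ] ℝ :=
  LinearMap.mkContinuous
    { toFun := fun x => pairing (fun m => φ (S.unitVec m)) (S.coord x)
      map_add' := fun x y => by
        rw [map_add]
        exact pairing_add_right (S.summable_apply_unitVec φ) (S.abs_coord_le x) (S.abs_coord_le y)
      map_smul' := fun c x => by
        rw [map_smul]
        exact pairing_const_mul _ _ c }
    ‖φ‖ fun x => by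
      rw [mul_comm]
      refine (abs_pairing_le (S.summable_apply_unitVec φ) (S.abs_coord_le x)
        (Set.subset_univ _)).trans ?_
      gcongr
      exact (absMass_le_tsum (S.summable_apply_unitVec φ) _).trans (S.tsum_abs_apply_unitVec_le φ)

theorem regularPart_apply (φ : X →L[ℝ] ℝ) (x : X) :
    S.regularPart φ x = pairing (fun m => φ (S.unitVec m)) (S.coord x) := rfl

theorem regularPart_unitVec (φ : X →L[ℝ] ℝ) (m : N) :
    S.regularPart φ (S.unitVec m) = φ (S.unitVec m) := by
  rw [regularPart_apply, S.coord_unitVec, pairing_single]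

theorem exists_forall_norm_sum_smul_le (hh : IsAlmostDisjoint fun ξ => (h ξ).support)
    (G : Finset I) : ∃ E : Finset N, ∀ σ : I → SignType,
      ‖∑ ξ ∈ G, (σ ξ : ℝ) • (S.signVec ξ - ∑ m ∈ E, (h ξ m : ℝ) • S.unitVec m)‖ ≤ 1 := by
  obtain ⟨E, hE⟩ := hh.exists_pairwiseDisjoint_sdiff G
  refine ⟨E, fun σ => S.norm_le zero_le_one fun m => ?_⟩
  have hcoord (ξ) : S.coord (S.signVec ξ - ∑ m ∈ E, (h ξ m : ℝ) • S.unitVec m) m =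
      if m ∈ E then 0 else (h ξ m : ℝ) := by
    rw [map_sub, Pi.sub_apply, S.coord_sum_smul_unitVec, S.coord_signVec]
    split_ifs <;> simp
  simp only [map_sum, map_smul, Finset.sum_apply, Pi.smul_apply, hcoord, smul_eq_mul]
  by_cases hm : m ∈ E
  · simp [hm]
  simp only [hm, if_false]
  by_cases hex : ∃ ξ ∈ G, h ξ m ≠ 0
  · obtain ⟨ξ, hξ, hξm⟩ := hex
    rw [Finset.sum_eq_single_of_mem ξ hξ fun η hη hne => ?_, abs_mul]
    · exact mul_le_one₀ (abs_signType_cast_le_one _) (abs_nonneg _) (abs_signType_cast_le_one _)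
    · have : m ∉ (h η).support := fun hηm =>
        Set.disjoint_left.1 (hE hη hξ hne) ⟨hηm, hm⟩ ⟨hξm, hm⟩
      simp [Function.notMem_support.1 this]
  · push Not at hex
    rw [Finset.sum_eq_zero fun ξ hξ => by simp [hex ξ hξ]]
    simp

theorem countable_support_apply_signVec (hh : IsAlmostDisjoint fun ξ => (h ξ).support)
    {φ : X →L[ℝ] ℝ} (hφ : ∀ m, φ (S.unitVec m) = 0) :
    (fun ξ => φ (S.signVec ξ)).support.Countable := by
  refine (summable_of_sum_le (c := ‖φ‖) (fun ξ => abs_nonneg (φ (S.signVec ξ)))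
    fun G => ?_).of_abs.countable_support
  obtain ⟨E, hE⟩ := S.exists_forall_norm_sum_smul_le hh G
  simpa [hφ] using sum_abs_apply_le φ hE

theorem exists_forall_apply_ne_abs [Countable N] (hdiag : IsDiagonalizing h)
    (hh : IsAlmostDisjoint fun ξ => (h ξ).support) {Λ : N → X →L[ℝ] ℝ} {M : ℝ}
    (hΛ : ∀ n, ‖Λ n‖ ≤ M) (hunit : ∀ n, 1 ≤ |Λ n (S.unitVec n)|) :
    ∃ x, ∀ y, ∃ n, Λ n y ≠ |Λ n x| := by
  set a : N → N → ℝ := fun n m => Λ n (S.unitVec m)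
  set β : I → N → ℝ := fun ξ n => (Λ n - S.regularPart (Λ n)) (S.signVec ξ)
  have ha : IsAdmissible a := ⟨fun n => S.summable_apply_unitVec (Λ n),
    ⟨M, fun n => (S.tsum_abs_apply_unitVec_le (Λ n)).trans (hΛ n)⟩, hunit⟩
  have hβ : β.support.Countable := by
    refine (Set.countable_iUnion fun n => S.countable_support_apply_signVec hh
      (φ := Λ n - S.regularPart (Λ n)) fun m => ?_).mono fun ξ hξ => ?_
    · rw [sub_apply, S.regularPart_unitVec, sub_self]
    · exact Set.mem_iUnion.2 (Function.ne_iff.1 hξ)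
  have hsign (ξ n) : pairing (a n) (h ξ ·) + β ξ n = Λ n (S.signVec ξ) := by
    simp [a, β, regularPart_apply, funext (S.coord_signVec ξ)]
  obtain ⟨ξ, hξ, hfar⟩ := hdiag a β ha hβ
  refine ⟨S.signVec ξ, fun y => ?_⟩
  by_contra! hy
  obtain ⟨ε, hε, hMε⟩ := exists_pos_mul_lt (show (0 : ℝ) < 1 / 30 by norm_num) M
  obtain ⟨u, t, hut⟩ := S.exists_norm_sub_le y hε
  obtain ⟨n, hn⟩ := hfar u t
  refine hn.not_ge ?_
  calc |(|pairing (a n) (h ξ ·)| - (pairing (a n) u +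
        t.sum fun η c => (c : ℝ) * (pairing (a n) (h η ·) + β η n)) : ℝ)|
      = |Λ n (y - ((u.sum fun m c => c • S.unitVec m) +
          t.sum fun η c => (c : ℝ) • S.signVec η))| := by
        have hξn : pairing (a n) (h ξ ·) = Λ n (S.signVec ξ) := by
          rw [← hsign, hξ, Pi.zero_apply, add_zero]
        simp only [hsign, hξn, pairing_finsupp, map_sub, map_add, map_finsuppSum, map_smul, hy,
          smul_eq_mul, a]
    _ ≤ M * ε := (Λ n).le_of_opNorm_le_of_le (hΛ n) hut
    _ ≤ 1 / 30 := hMε.le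

end SequenceModel

theorem SequenceModel.not_isCSpace {I N X : Type*} [DecidableEq N] [Countable N]
    {h : I → N → SignType} [NormedAddCommGroup X] [NormedSpace ℝ X] (S : SequenceModel h X)
    (hdiag : IsDiagonalizing h) (hh : IsAlmostDisjoint fun ξ => (h ξ).support) :
    ¬ IsCSpace X := by
  rintro ⟨K, _, _, _, ⟨T⟩⟩
  set c : ℝ := ‖(T.symm : C(K, ℝ) →L[ℝ] X)‖ + 1
  have hc_pos : 0 < c := by positivity
  have hpoint (m) : ∃ k, 1 ≤ |c * T (S.unitVec m) k| := by
    by_contra! hlt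
    have hT : ‖T (S.unitVec m)‖ ≤ 1 / c := by
      refine (ContinuousMap.norm_le _ (by positivity)).2 fun k => ?_
      have := (hlt k).le
      rwa [abs_mul, abs_of_pos hc_pos, ← le_div_iff₀' hc_pos] at this
    have hunit : 1 ≤ ‖S.unitVec m‖ := by
      simpa [S.coord_unitVec] using S.abs_coord_le (S.unitVec m) m
    have hsymm := (T.symm : C(K, ℝ) →L[ℝ] X).le_opNorm_of_le hT
    rw [ContinuousLinearEquiv.coe_coe, T.symm_apply_apply] at hsymm
    refine (hunit.trans hsymm).not_gt ?_
    rw [mul_one_div, div_lt_one hc_pos]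
    exact lt_add_one _
  choose k hk using hpoint
  let Λ (n : N) : X →L[ℝ] ℝ :=
    c • (ContinuousMap.evalCLM ℝ (k n)).comp (T : X →L[ℝ] C(K, ℝ))
  have hΛ (n) : ‖Λ n‖ ≤ c * ‖(T : X →L[ℝ] C(K, ℝ))‖ := by
    refine (Λ n).opNorm_le_bound (by positivity) fun x => ?_
    have hTx := ((T x).norm_coe_le_norm (k n)).trans ((T : X →L[ℝ] C(K, ℝ)).le_opNorm x)
    calc ‖Λ n x‖ = c * ‖T x (k n)‖ := by simp [Λ, abs_of_pos hc_pos]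
      _ ≤ c * ‖(T : X →L[ℝ] C(K, ℝ))‖ * ‖x‖ := by rw [mul_assoc]; gcongr
  obtain ⟨x, hx⟩ := S.exists_forall_apply_ne_abs hdiag hh hΛ hk
  obtain ⟨n, hn⟩ := hx (T.symm |T x|)
  exact hn (by simp [Λ, abs_mul, abs_of_pos hc_pos])

end SequenceModel

section DerivedSet

variable {X : Type*} [TopologicalSpace X]

theorem notMem_derivedSet_of_isOpen {A U : Set X} {x : X} (hU : IsOpen U) (hx : x ∈ U)
    (h : U ∩ A ⊆ {x}) : x ∉ derivedSet A := by
  rw [mem_derivedSet, accPt_iff_nhds]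
  push Not
  exact ⟨U, hU.mem_nhds hx, fun y hy => h hy⟩

theorem isScatteredSpace_of_derivedSet_eq_empty
    (h : derivedSet (derivedSet (derivedSet (Set.univ : Set X))) = ∅) : IsScatteredSpace X := by
  rintro S ⟨y, hy⟩
  by_contra! hS
  have hS' : S ⊆ derivedSet S := fun x hx => by
    rw [mem_derivedSet, accPt_iff_nhds]
    intro V hV
    obtain ⟨U, hUV, hU, hxU⟩ := mem_nhds_iff.1 hV
    by_contra! hne
    exact hS x hx U hU (subset_antisymm (fun z hz => hne z ⟨hUV hz.1, hz.2⟩)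
      (Set.singleton_subset_iff.2 ⟨hxU, hx⟩))
  have h₁ : S ⊆ derivedSet Set.univ := hS'.trans (derivedSet_mono _ _ S.subset_univ)
  have h₂ : S ⊆ derivedSet (derivedSet Set.univ) := hS'.trans (derivedSet_mono _ _ h₁)
  exact (h ▸ hS'.trans (derivedSet_mono _ _ h₂)) hy

end DerivedSet

theorem isCompact_preimage_coe_setOf_le_abs {X : Type*} [TopologicalSpace X]
    {f : C(OnePoint X, ℝ)} (hf : f OnePoint.infty = 0) {ε : ℝ} (hε : 0 < ε) :
    IsCompact {x : X | ε ≤ |f x|} := by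
  have hclosed : IsClosed {x | ε ≤ |f x|} := isClosed_le (by fun_prop) (by fun_prop)
  refine ((OnePoint.isClosed_iff_of_notMem ?_).1 hclosed).2
  simp [hf, hε]

/-- The Mrówka space (Ψ-space) of a family of sets: the points `pt n` are isolated, and the
neighbourhoods of `lim j` are the sets containing almost all points of `B j`. -/
inductive Mrowka {N J : Type*} (B : J → Set N) : Type _
  | pt (n : N)
  | lim (j : J)

namespace Mrowka

section Topology

variable {N J : Type*} {B : J → Set N}

instance : TopologicalSpace (Mrowka B) where
  IsOpen U := ∀ j, lim j ∈ U → {n ∈ B j | pt n ∉ U}.Finite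
  isOpen_univ := by simp
  isOpen_inter U V hU hV j hj := by
    refine ((hU j hj.1).union (hV j hj.2)).subset ?_
    rintro n ⟨hn, hnUV⟩
    exact (not_and_or.1 hnUV).imp (⟨hn, ·⟩) (⟨hn, ·⟩)
  isOpen_sUnion 𝒰 h𝒰 := by
    rintro j ⟨U, hU, hj⟩
    exact (h𝒰 U hU j hj).subset fun n hn => ⟨hn.1, fun h => hn.2 ⟨U, hU, h⟩⟩

theorem isOpen_iff {U : Set (Mrowka B)} :
    IsOpen U ↔ ∀ j, lim j ∈ U → {n ∈ B j | pt n ∉ U}.Finite := Iff.rfl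

theorem isClopen_singleton_pt (n : N) : IsClopen ({pt n} : Set (Mrowka B)) :=
  ⟨⟨isOpen_iff.2 fun _ _ => (Set.finite_singleton n).subset fun m hm => by simpa using hm.2⟩,
    isOpen_iff.2 fun _ hj => by simp at hj⟩

theorem singleton_pt_mem_nhds (n : N) : {pt n} ∈ 𝓝 (pt n : Mrowka B) :=
  (isClopen_singleton_pt n).isOpen.mem_nhds rfl

/-- The largest basic neighbourhood of `lim j`. -/
def cone (B : J → Set N) (j : J) : Set (Mrowka B) := insert (lim j) (pt '' B j)

@[simp]
theorem pt_mem_cone {n : N} {j : J} : pt n ∈ cone B j ↔ n ∈ B j := by simp [cone]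

@[simp]
theorem lim_mem_cone {i j : J} : lim i ∈ cone B j ↔ i = j := by simp [cone]

theorem isOpen_cone (j : J) : IsOpen (cone B j) :=
  isOpen_iff.2 fun i hi => by simp [lim_mem_cone.1 hi]

theorem cone_mem_nhds (j : J) : cone B j ∈ 𝓝 (lim j) :=
  (isOpen_cone j).mem_nhds (lim_mem_cone.2 rfl)

theorem isClopen_cone (hB : IsAlmostDisjoint B) (j : J) : IsClopen (cone B j) :=
  ⟨⟨isOpen_iff.2 fun i hi => (hB (by simpa using hi)).subset fun n hn =>
    ⟨hn.1, by simpa using hn.2⟩⟩, isOpen_cone j⟩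

theorem isCompact_cone (j : J) : IsCompact (cone B j) := by
  have hlim : Tendsto (fun n : B j => (pt n : Mrowka B)) cofinite (𝓝 (lim j)) :=
    tendsto_nhds.2 fun U hU hj =>
      ((hU j hj).preimage Subtype.val_injective.injOn).subset fun n hn => ⟨n.2, hn⟩
  rw [cone, Set.image_eq_range]
  exact hlim.isCompact_insert_range_of_cofinite

instance : WeaklyLocallyCompactSpace (Mrowka B) where
  exists_compact_mem_nhds
    | pt n => ⟨{pt n}, isCompact_singleton, singleton_pt_mem_nhds n⟩
    | lim j => ⟨cone B j, isCompact_cone j, cone_mem_nhds j⟩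

theorem totallySeparatedSpace (hB : IsAlmostDisjoint B) : TotallySeparatedSpace (Mrowka B) := by
  refine totallySeparatedSpace_iff_exists_isClopen.2 ?_
  rintro (n | i) y hxy
  · exact ⟨{pt n}, isClopen_singleton_pt n, rfl, hxy.symm⟩
  rcases y with n | j
  · exact ⟨{pt n}ᶜ, (isClopen_singleton_pt n).compl, hxy, by simp⟩
  · exact ⟨cone B i, isClopen_cone hB i, lim_mem_cone.2 rfl, fun h =>
      hxy (congrArg lim (lim_mem_cone.1 h).symm)⟩

theorem finite_setOf_lim_mem {s : Set (Mrowka B)} (hs : IsCompact s) : {j | lim j ∈ s}.Finite := by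
  refine hs.induction_on (p := fun s => {j | lim j ∈ s}.Finite) (by simp)
    (fun s t hst ht => ht.subset fun j hj => hst hj) (fun s t hs ht => hs.union ht) ?_
  rintro (n | j) -
  · exact ⟨{pt n}, mem_nhdsWithin_of_mem_nhds (singleton_pt_mem_nhds n),
      by simp⟩
  · exact ⟨cone B j, mem_nhdsWithin_of_mem_nhds (cone_mem_nhds j),
      by simp⟩

theorem finite_of_forall_lim_notMem {s : Set (Mrowka B)} (hs : IsCompact s)
    (hlim : ∀ j, lim j ∉ s) : s.Finite := by
  refine hs.induction_on (p := Set.Finite) Set.finite_empty (fun s t hst ht => ht.subset hst)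
    (fun s t => Set.Finite.union) ?_
  rintro (n | j) hx
  · exact ⟨{pt n}, mem_nhdsWithin_of_mem_nhds (singleton_pt_mem_nhds n),
      Set.finite_singleton _⟩
  · exact absurd hx (hlim j)

instance [Infinite J] : NoncompactSpace (Mrowka B) where
  noncompact_univ h := (finite_setOf_lim_mem h).not_infinite Set.infinite_univ

theorem denseRange_pt (hB : ∀ j, (B j).Infinite) : DenseRange (pt : N → Mrowka B) := by
  rw [DenseRange, dense_iff_inter_open]
  rintro U hU ⟨n | j, hx⟩
  · exact ⟨pt n, hx, n, rfl⟩
  · obtain ⟨n, hn, hnU⟩ := (hB j).exists_notMem_finite (hU j hx)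
    exact ⟨pt n, not_not.1 fun h => hnU ⟨hn, h⟩, n, rfl⟩

theorem denseRange_coe_pt [Infinite J] (hB : ∀ j, (B j).Infinite) :
    DenseRange fun n : N => ((pt n : Mrowka B) : OnePoint (Mrowka B)) :=
  OnePoint.denseRange_coe.comp (denseRange_pt hB) OnePoint.continuous_coe

theorem separableSpace_onePoint [Countable N] [Infinite J] (hB : ∀ j, (B j).Infinite) :
    TopologicalSpace.SeparableSpace (OnePoint (Mrowka B)) :=
  ⟨_, Set.countable_range _, denseRange_coe_pt hB⟩

theorem derivedSet_derivedSet_derivedSet_onePoint :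
    derivedSet (derivedSet (derivedSet (Set.univ : Set (OnePoint (Mrowka B))))) = ∅ := by
  have hpt (A : Set (OnePoint (Mrowka B))) (n : N) : ((pt n : Mrowka B) : OnePoint _) ∉
      derivedSet A := by
    refine notMem_derivedSet_of_isOpen
      (OnePoint.isOpenMap_coe _ (isClopen_singleton_pt n).isOpen) ⟨_, rfl, rfl⟩ ?_
    rw [Set.image_singleton]
    exact Set.inter_subset_left
  have hlim (A : Set (OnePoint (Mrowka B))) (j : J) : ((lim j : Mrowka B) : OnePoint _) ∉
      derivedSet (derivedSet A) := by
    refine notMem_derivedSet_of_isOpen (OnePoint.isOpenMap_coe _ (isOpen_cone j))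
      ⟨_, lim_mem_cone.2 rfl, rfl⟩ ?_
    rintro _ ⟨⟨_, rfl | ⟨n, -, rfl⟩, rfl⟩, hx⟩
    · rfl
    · exact absurd hx (hpt A n)
  refine Set.eq_empty_iff_forall_notMem.2 fun x hx => ?_
  rcases x with _ | n | j
  · refine notMem_derivedSet_of_isOpen isOpen_univ trivial ?_ hx
    rintro (_ | n | j) ⟨-, hy⟩
    · rfl
    · exact absurd hy (hpt _ n)
    · exact absurd hy (hlim _ j)
  · exact hpt _ n hx
  · exact hlim _ j hx

end Topology

section Map

variable {N J N' J' : Type*} {B : J → Set N} {B' : J' → Set N'}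

/-- The map between Mrówka spaces induced by maps of points and of indices. -/
def map (B : J → Set N) (B' : J' → Set N') (f : N → N') (g : J → J') : Mrowka B → Mrowka B'
  | pt n => pt (f n)
  | lim j => lim (g j)

theorem continuous_map {f : N → N'} {g : J → J'} (hf : ∀ n, (f ⁻¹' {n}).Finite)
    (hfg : ∀ j, ∀ n ∈ B j, f n ∈ B' (g j)) : Continuous (map B B' f g) :=
  ⟨fun _ hU => isOpen_iff.2 fun j hj => ((hU (g j) hj).preimage' fun n _ => hf n).subset
    fun n hn => ⟨hfg j n hn.1, hn.2⟩⟩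

theorem exists_isCompact_preimage_map_subset {f : N → N'} {g : J → J'}
    (hf : ∀ n, (f ⁻¹' {n}).Finite) (hg : ∀ j, (g ⁻¹' {j}).Finite)
    (hfg : ∀ n j', f n ∈ B' j' → ∃ j, g j = j' ∧ n ∈ B j) {s : Set (Mrowka B')}
    (hs : IsCompact s) : ∃ t, IsCompact t ∧ map B B' f g ⁻¹' s ⊆ t := by
  refine hs.induction_on (p := fun s => ∃ t, IsCompact t ∧ map B B' f g ⁻¹' s ⊆ t)
    ⟨∅, isCompact_empty, Set.Subset.rfl⟩ (fun s s' hss' ⟨t, ht, hst⟩ => ⟨t, ht,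
      (Set.preimage_mono hss').trans hst⟩) (fun s s' ⟨t, ht, hst⟩ ⟨t', ht', hst'⟩ =>
      ⟨t ∪ t', ht.union ht', Set.union_subset_union hst hst'⟩) ?_
  rintro (n | j') -
  · refine ⟨{pt n}, mem_nhdsWithin_of_mem_nhds (singleton_pt_mem_nhds n),
      pt '' (f ⁻¹' {n}), ((hf n).image _).isCompact, ?_⟩
    rintro (m | j) hm
    · exact ⟨m, by simpa [map] using hm, rfl⟩
    · simp [map] at hm
  · refine ⟨cone B' j', mem_nhdsWithin_of_mem_nhds (cone_mem_nhds j'), ⋃ j ∈ g ⁻¹' {j'}, cone B j,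
      (hg j').isCompact_biUnion fun j _ => isCompact_cone j, ?_⟩
    rintro (m | j) hm
    · obtain ⟨j, hj, hmj⟩ := hfg m j' (pt_mem_cone.1 hm)
      exact Set.mem_biUnion hj (pt_mem_cone.2 hmj)
    · exact Set.mem_biUnion (lim_mem_cone.1 hm) (lim_mem_cone.2 rfl)

theorem continuous_onePointMap {f : N → N'} {g : J → J'} (hf : ∀ n, (f ⁻¹' {n}).Finite)
    (hg : ∀ j, (g ⁻¹' {j}).Finite) (hfg : ∀ j, ∀ n ∈ B j, f n ∈ B' (g j))
    (hfg' : ∀ n j', f n ∈ B' j' → ∃ j, g j = j' ∧ n ∈ B j) :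
    Continuous (OnePoint.map (map B B' f g)) := by
  have hmap : Continuous (map B B' f g) := continuous_map hf hfg
  refine OnePoint.continuous_map hmap fun u hu => ?_
  obtain ⟨s, ⟨hsc, hs⟩, hsu⟩ := hasBasis_coclosedCompact.mem_iff.1 hu
  obtain ⟨t, ht, hst⟩ := exists_isCompact_preimage_map_subset hf hg hfg' hs
  have hs' : IsCompact (map B B' f g ⁻¹' s) := ht.of_isClosed_subset (hsc.preimage hmap) hst
  exact mem_of_superset (hs'.compl_mem_coclosedCompact_of_isClosed (hsc.preimage hmap))
    fun x hx => hsu hx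

end Map

end Mrowka

section Involution

variable {E : Type*} [NormedAddCommGroup E] [NormedSpace ℝ E] {T : E →L[ℝ] E} {c : ℝ} {x : E}

/-- The operator `(1 + c T) / 2`: for an involution `T` and `c = ±1` it projects onto the eigenspace
of `T` for the eigenvalue `c`. -/
noncomputable def eigenprojection (T : E →L[ℝ] E) (c : ℝ) : E →L[ℝ] E := (2⁻¹ : ℝ) • (1 + c • T)

theorem eigenprojection_apply (T : E →L[ℝ] E) (c : ℝ) (x : E) :
    eigenprojection T c x = (2⁻¹ : ℝ) • (x + c • T x) := rfl

theorem eigenprojection_add_eigenprojection_neg (T : E →L[ℝ] E) (c : ℝ) (x : E) :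
    eigenprojection T c x + eigenprojection T (-c) x = x := by
  simp only [eigenprojection_apply]
  module

theorem eigenprojection_eq_self (hc : c * c = 1) (hx : T x = c • x) :
    eigenprojection T c x = x := by
  rw [eigenprojection_apply, hx, smul_smul, hc]
  module

theorem apply_eigenprojection (hT : ∀ x, T (T x) = x) (hc : c * c = 1) (x : E) :
    T (eigenprojection T c x) = c • eigenprojection T c x := by
  simp only [eigenprojection_apply, map_smul, map_add, hT, smul_add, smul_smul]
  rw [mul_left_comm c, hc, mul_comm c, mul_one, add_comm]

theorem range_eigenprojection (hT : ∀ x, T (T x) = x) (hc : c * c = 1) :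
    Set.range (eigenprojection T c) = {x | T x = c • x} := by
  refine subset_antisymm ?_ fun x hx => ⟨x, eigenprojection_eq_self hc hx⟩
  rintro _ ⟨x, rfl⟩
  exact apply_eigenprojection hT hc x

theorem eigenprojection_eigenprojection (hT : ∀ x, T (T x) = x) (hc : c * c = 1) (x : E) :
    eigenprojection T c (eigenprojection T c x) = eigenprojection T c x :=
  eigenprojection_eq_self hc (apply_eigenprojection hT hc x)

theorem norm_eigenprojection (hT : ‖T‖ ≤ 1) (hc : c * c = 1) (hx : T x = c • x) (hx₀ : x ≠ 0) :
    ‖eigenprojection T c‖ = 1 := by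
  have habs : |c| = 1 := (abs_eq zero_le_one).2 (mul_self_eq_one_iff.1 hc)
  refine le_antisymm ((eigenprojection T c).opNorm_le_bound zero_le_one fun y => ?_) ?_
  · calc ‖eigenprojection T c y‖ ≤ 2⁻¹ * (‖y‖ + ‖T y‖) := by
          rw [eigenprojection_apply, norm_smul, norm_inv, Real.norm_two]
          gcongr
          refine (norm_add_le _ _).trans_eq ?_
          rw [norm_smul, Real.norm_eq_abs, habs, one_mul]
      _ ≤ 2⁻¹ * (‖y‖ + 1 * ‖y‖) := by
          gcongr
          exact T.le_of_opNorm_le hT y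
      _ = 1 * ‖y‖ := by ring
  · have hle := (eigenprojection T c).le_opNorm x
    rw [eigenprojection_eq_self hc hx] at hle
    exact le_of_mul_le_mul_right (by rwa [one_mul]) (norm_pos_iff.2 hx₀)

end Involution

section OddFunctions

variable {L : Type*} [TopologicalSpace L] {σ : C(L, L)} {f : C(L, ℝ)}

/-- The continuous functions which change sign under `σ`. -/
def oddFunctions (σ : C(L, L)) : Submodule ℝ C(L, ℝ) where
  carrier := {f | ∀ x, f (σ x) = -f x}
  add_mem' hf hg x := by simp [hf x, hg x, add_comm]
  zero_mem' x := by simp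
  smul_mem' c f hf x := by simp [hf x]

theorem mem_oddFunctions : f ∈ oddFunctions σ ↔ ∀ x, f (σ x) = -f x := Iff.rfl

theorem coe_oddFunctions :
    (oddFunctions σ : Set C(L, ℝ)) = {f | ContinuousMap.compCLM ℝ ℝ σ f = (-1 : ℝ) • f} := by
  ext f
  simp [mem_oddFunctions, ContinuousMap.ext_iff]

theorem isClosed_oddFunctions : IsClosed (oddFunctions σ : Set C(L, ℝ)) := by
  rw [coe_oddFunctions]
  exact isClosed_eq (ContinuousMap.compCLM ℝ ℝ σ).continuous (continuous_const_smul _)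

theorem sub_comp_mem_oddFunctions (hσ : Function.Involutive σ) (f : C(L, ℝ)) :
    f - f.comp σ ∈ oddFunctions σ := fun x => by simp [hσ x]

theorem apply_eq_zero_of_mem_oddFunctions (hf : f ∈ oddFunctions σ) {x : L} (hx : σ x = x) :
    f x = 0 := by
  have := hf x
  rw [hx] at this
  linarith

theorem compCLM_compCLM (hσ : Function.Involutive σ) (f : C(L, ℝ)) :
    ContinuousMap.compCLM ℝ ℝ σ (ContinuousMap.compCLM ℝ ℝ σ f) = f := by
  ext x
  simp [hσ x]

variable [CompactSpace L]

theorem norm_compCLM_le_one : ‖ContinuousMap.compCLM ℝ ℝ σ‖ ≤ 1 :=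
  ContinuousLinearMap.opNorm_le_bound _ zero_le_one fun f => by
    rw [one_mul]
    exact (ContinuousMap.norm_le _ (norm_nonneg f)).2 fun x => f.norm_coe_le_norm (σ x)

theorem exists_projection_oddFunctions (hσ : Function.Involutive σ) (hodd : oddFunctions σ ≠ ⊥) :
    ∃ Q : C(L, ℝ) →L[ℝ] C(L, ℝ), ‖Q‖ = 1 ∧ (∀ f, Q (Q f) = Q f) ∧
      Set.range Q = (oddFunctions σ : Set C(L, ℝ)) := by
  have hc : (-1 : ℝ) * -1 = 1 := by norm_num
  obtain ⟨f, hf, hf₀⟩ := (Submodule.ne_bot_iff _).1 hodd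
  rw [coe_oddFunctions]
  rw [← SetLike.mem_coe, coe_oddFunctions] at hf
  exact ⟨_, norm_eigenprojection norm_compCLM_le_one hc hf hf₀,
    eigenprojection_eigenprojection (compCLM_compCLM hσ) hc,
    range_eigenprojection (compCLM_compCLM hσ) hc⟩

section Quotient

variable {K : Type*} [TopologicalSpace K] [T2Space K] {θ : C(L, K)}

theorem setOf_exists_eq_comp (hθ : Function.Surjective θ)
    (hfib : ∀ x y, θ x = θ y ↔ x = y ∨ x = σ y) :
    {f | ∃ g : C(K, ℝ), f = g.comp θ} =
      {f | ContinuousMap.compCLM ℝ ℝ σ f = (1 : ℝ) • f} := by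
  simp only [one_smul, ContinuousMap.compCLM_apply, ContinuousMap.ext_iff,
    ContinuousMap.comp_apply]
  refine subset_antisymm ?_ fun f hf => ?_
  · rintro f ⟨g, hg⟩ x
    rw [hg, hg, (hfib (σ x) x).2 (Or.inr rfl)]
  · have hquot : IsQuotientMap θ := θ.continuous.isClosedMap.isQuotientMap θ.continuous hθ
    have hlift (x y : L) (hxy : θ x = θ y) : f x = f y := by
      rcases (hfib x y).1 hxy with rfl | rfl
      · rfl
      · exact hf y
    exact ⟨hquot.lift f hlift, fun x => (DFunLike.congr_fun (hquot.lift_comp f hlift) x).symm⟩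

theorem exists_projection_comp [Nonempty L] (hσ : Function.Involutive σ)
    (hθ : Function.Surjective θ) (hfib : ∀ x y, θ x = θ y ↔ x = y ∨ x = σ y) :
    ∃ P : C(L, ℝ) →L[ℝ] C(L, ℝ), ‖P‖ = 1 ∧ (∀ f, P (P f) = P f) ∧
      Set.range P = {f | ∃ g : C(K, ℝ), f = g.comp θ} := by
  rw [setOf_exists_eq_comp hθ hfib]
  exact ⟨_, norm_eigenprojection norm_compCLM_le_one (mul_one 1)
    (by rw [one_smul]; rfl) (one_ne_zero (α := C(L, ℝ))),
    eigenprojection_eigenprojection (compCLM_compCLM hσ) (mul_one 1),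
    range_eigenprojection (compCLM_compCLM hσ) (mul_one 1)⟩

theorem existsUnique_eq_comp_add (hσ : Function.Involutive σ) (hθ : Function.Surjective θ)
    (hfib : ∀ x y, θ x = θ y ↔ x = y ∨ x = σ y) (f : C(L, ℝ)) :
    ∃! p : C(K, ℝ) × oddFunctions σ, f = p.1.comp θ + p.2 := by
  have heven : eigenprojection (ContinuousMap.compCLM ℝ ℝ σ) 1 f ∈
      {f | ∃ g : C(K, ℝ), f = g.comp θ} := by
    rw [setOf_exists_eq_comp hθ hfib]
    exact apply_eigenprojection (compCLM_compCLM hσ) (mul_one 1) f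
  have hodd : eigenprojection (ContinuousMap.compCLM ℝ ℝ σ) (-1) f ∈ oddFunctions σ := by
    rw [← SetLike.mem_coe, coe_oddFunctions]
    exact apply_eigenprojection (compCLM_compCLM hσ) (by norm_num) f
  obtain ⟨g, hg⟩ := heven
  have hsum : f = g.comp θ + eigenprojection (ContinuousMap.compCLM ℝ ℝ σ) (-1) f := by
    rw [← hg, eigenprojection_add_eigenprojection_neg]
  refine ⟨(g, ⟨_, hodd⟩), hsum, ?_⟩
  rintro ⟨g', k⟩ hf
  have hg' : g'.comp θ = g.comp θ := by
    rw [← hg]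
    ext x
    have hσx : θ (σ x) = θ x := (hfib _ _).2 (Or.inr rfl)
    simp only [eigenprojection_apply, hf, ContinuousMap.compCLM_apply, ContinuousMap.smul_apply,
      ContinuousMap.add_apply, ContinuousMap.comp_apply, hσx, mem_oddFunctions.1 k.2 x, smul_eq_mul]
    ring
  obtain rfl : g' = g := (ContinuousMap.cancel_right hθ).1 hg'
  exact Prod.ext rfl (Subtype.ext (add_left_cancel (hf.symm.trans hsum)))

end Quotient

end OddFunctions

theorem isClopen_image_onePointCoe {X : Type*} [TopologicalSpace X] {U : Set X} (hU : IsClopen U)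
    (hUc : IsCompact U) : IsClopen ((↑) '' U : Set (OnePoint X)) :=
  ⟨OnePoint.isClosed_image_coe.2 ⟨hU.isClosed, hUc⟩, OnePoint.isOpenMap_coe _ hU.isOpen⟩

theorem charFn_image_coe_apply {X : Type*} [TopologicalSpace X] {U : Set X}
    (hU : IsClopen ((↑) '' U : Set (OnePoint X))) (x : X) :
    LocallyConstant.charFn ℝ hU (x : OnePoint X) = U.indicator 1 x := by
  rw [LocallyConstant.coe_charFn]
  exact Set.indicator_image OnePoint.coe_injective

theorem exists_finsupp_forall_abs_sub_lt {J D : Type*} [Zero D] {c : D → ℝ} (hc : DenseRange c)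
    (hc₀ : c 0 = 0) {x : J → ℝ} {ε : ℝ} (hε : 0 < ε) (hx : {j | ε ≤ |x j|}.Finite) :
    ∃ t : J →₀ D, ∀ j, |x j - c (t j)| < ε := by
  classical
  choose d hd using fun j => hc.exists_dist_lt (x j) hε
  refine ⟨Finsupp.onFinset hx.toFinset (fun j => if ε ≤ |x j| then d j else 0) fun j hj =>
    hx.mem_toFinset.2 (of_not_not fun h => hj (if_neg h)), fun j => ?_⟩
  rw [Finsupp.onFinset_apply]
  split_ifs with h
  · exact hd j
  · simpa [hc₀] using h

theorem signTypeUnits_eq_or_eq_neg (s t : SignTypeˣ) : s = t ∨ s = -t := by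
  revert s t
  decide

section Double

variable {I N : Type*} {h : I → N → SignType}

/-- Two copies of every point and of every sign function: the copy `(ξ, s)` collects the points
`(n, k)` at which the odd extension `k • h ξ n` of `h ξ` has the value `s`. -/
def doubleFamily (h : I → N → SignType) (q : I × SignTypeˣ) : Set (N × SignTypeˣ) :=
  {p | h q.1 p.1 * p.2 = q.2}

theorem mem_doubleFamily {p : N × SignTypeˣ} {q : I × SignTypeˣ} :
    p ∈ doubleFamily h q ↔ h q.1 p.1 * p.2 = q.2 := Iff.rfl

theorem mem_support_of_mem_doubleFamily {p : N × SignTypeˣ} {q : I × SignTypeˣ}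
    (hp : p ∈ doubleFamily h q) : p.1 ∈ (h q.1).support :=
  left_ne_zero_of_mul (hp ▸ q.2.ne_zero)

theorem exists_mem_doubleFamily {p : N × SignTypeˣ} {ξ : I} (hp : p.1 ∈ (h ξ).support) :
    ∃ s, p ∈ doubleFamily h (ξ, s) :=
  ⟨Units.mk0 (h ξ p.1) hp * p.2, rfl⟩

theorem neg_mem_doubleFamily {p : N × SignTypeˣ} {q : I × SignTypeˣ} :
    (p.1, -p.2) ∈ doubleFamily h (q.1, -q.2) ↔ p ∈ doubleFamily h q := by
  simp [mem_doubleFamily]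

theorem finite_preimage_fst {α β : Type*} [Finite β] (a : α) :
    ((Prod.fst : α × β → α) ⁻¹' {a}).Finite :=
  (Set.finite_range (Prod.mk a)).subset fun p hp => ⟨p.2, Prod.ext hp.symm rfl⟩

theorem isAlmostDisjoint_doubleFamily (hh : IsAlmostDisjoint fun ξ => (h ξ).support) :
    IsAlmostDisjoint (doubleFamily h) := by
  rintro ⟨ξ, s⟩ ⟨η, t⟩ hne
  by_cases hξη : ξ = η
  · subst hξη
    refine Set.finite_empty.subset fun p hp => hne ?_
    exact Prod.ext rfl (Units.ext (hp.1.symm.trans hp.2))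
  · exact ((hh hξη).preimage' fun n _ => finite_preimage_fst n).subset fun p hp =>
      ⟨mem_support_of_mem_doubleFamily hp.1, mem_support_of_mem_doubleFamily hp.2⟩

theorem infinite_doubleFamily (hh : ∀ ξ, (h ξ).support.Infinite) (q : I × SignTypeˣ) :
    (doubleFamily h q).Infinite := by
  refine Set.Infinite.of_image Prod.fst ((hh q.1).mono fun n hn => ?_)
  refine ⟨(n, (Units.mk0 (h q.1 n) hn)⁻¹ * q.2), ?_, rfl⟩
  simp only [mem_doubleFamily, Units.val_mul, Units.val_inv_eq_inv_val]
  exact mul_inv_cancel_left₀ hn _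

theorem finite_preimage_map_id_neg {α : Type*} (p : α × SignTypeˣ) :
    ((fun q : α × SignTypeˣ => (q.1, -q.2)) ⁻¹' {p}).Finite :=
  (Set.finite_singleton p).preimage fun q _ r _ hqr => by simpa [Prod.ext_iff] using hqr

/-- The involution of the compactified Mrówka space of the double exchanging the two copies. -/
def doubleFlip (h : I → N → SignType) :
    C(OnePoint (Mrowka (doubleFamily h)), OnePoint (Mrowka (doubleFamily h))) where
  toFun := OnePoint.map (Mrowka.map _ _ (fun p => (p.1, -p.2)) fun q => (q.1, -q.2))
  continuous_toFun := Mrowka.continuous_onePointMap finite_preimage_map_id_neg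
    finite_preimage_map_id_neg (fun _ _ => neg_mem_doubleFamily.2)
    fun _ q hp => ⟨(q.1, -q.2), by simp, neg_mem_doubleFamily.1 (by simpa using hp)⟩

/-- The map which identifies the two copies of every point. -/
def doubleProj (h : I → N → SignType) :
    C(OnePoint (Mrowka (doubleFamily h)), OnePoint (Mrowka fun ξ => (h ξ).support)) where
  toFun := OnePoint.map (Mrowka.map _ _ Prod.fst Prod.fst)
  continuous_toFun := Mrowka.continuous_onePointMap finite_preimage_fst finite_preimage_fst
    (fun _ _ => mem_support_of_mem_doubleFamily) fun _ ξ hp =>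
      let ⟨s, hs⟩ := exists_mem_doubleFamily hp
      ⟨(ξ, s), rfl, hs⟩

section Apply

open Mrowka

theorem doubleFlip_pt (n : N) (s : SignTypeˣ) :
    doubleFlip h (OnePoint.some (pt (n, s))) =
      OnePoint.some (pt (n, -s)) := rfl

theorem doubleFlip_lim (ξ : I) (s : SignTypeˣ) :
    doubleFlip h (OnePoint.some (lim (ξ, s))) =
      OnePoint.some (lim (ξ, -s)) := rfl

theorem involutive_doubleFlip : Function.Involutive (doubleFlip h) := by
  rintro (_ | ⟨n, s⟩ | ⟨ξ, s⟩)
  · rfl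
  · exact congrArg (fun s => OnePoint.some (pt (n, s))) (neg_neg s)
  · exact congrArg (fun s => OnePoint.some (lim (ξ, s))) (neg_neg s)

theorem surjective_doubleProj : Function.Surjective (doubleProj h) := by
  rintro (_ | n | ξ)
  · exact ⟨OnePoint.infty, rfl⟩
  · exact ⟨OnePoint.some (pt (n, 1)), rfl⟩
  · exact ⟨OnePoint.some (lim (ξ, 1)), rfl⟩

theorem doubleProj_doubleFlip (x : OnePoint (Mrowka (doubleFamily h))) :
    doubleProj h (doubleFlip h x) = doubleProj h x := by
  rcases x with _ | _ | _ <;> rfl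

theorem doubleProj_eq_iff {x y : OnePoint (Mrowka (doubleFamily h))} :
    doubleProj h x = doubleProj h y ↔ x = y ∨ x = doubleFlip h y := by
  refine ⟨fun hxy => ?_, ?_⟩
  · rcases x with _ | ⟨n, s⟩ | ⟨ξ, s⟩ <;> rcases y with _ | ⟨m, t⟩ | ⟨η, t⟩ <;> cases hxy
    · exact Or.inl rfl
    all_goals
      rcases signTypeUnits_eq_or_eq_neg s t with rfl | rfl
      · exact Or.inl rfl
      · exact Or.inr rfl
  · rintro (rfl | rfl)
    · rfl
    · exact doubleProj_doubleFlip y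

section Odd

variable {f : C(OnePoint (Mrowka (doubleFamily h)), ℝ)}

theorem abs_apply_lim_of_mem_oddFunctions (hf : f ∈ oddFunctions (doubleFlip h))
    (q : I × SignTypeˣ) :
    |f (OnePoint.some (lim q))| = |f (OnePoint.some (lim (q.1, 1)))| := by
  rcases q with ⟨ξ, s⟩
  rcases signTypeUnits_eq_or_eq_neg s 1 with rfl | rfl
  · rfl
  · rw [← doubleFlip_lim, hf, abs_neg]

theorem abs_apply_pt_of_mem_oddFunctions (hf : f ∈ oddFunctions (doubleFlip h))
    (p : N × SignTypeˣ) :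
    |f (OnePoint.some (pt p))| = |f (OnePoint.some (pt (p.1, 1)))| := by
  rcases p with ⟨n, s⟩
  rcases signTypeUnits_eq_or_eq_neg s 1 with rfl | rfl
  · rfl
  · rw [← doubleFlip_pt, hf, abs_neg]

end Odd

variable {U : Set (Mrowka (doubleFamily h))}

/-- The odd function `1_U - 1_{σ U}` attached to a compact open set `U`, where `σ` is the flip. -/
noncomputable def oddIndicator (hU : IsClopen U) (hUc : IsCompact U) :
    oddFunctions (doubleFlip h) :=
  ⟨_, sub_comp_mem_oddFunctions involutive_doubleFlip
    (LocallyConstant.charFn ℝ (isClopen_image_onePointCoe hU hUc) : C(_, ℝ))⟩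

theorem oddIndicator_apply_pt (hU : IsClopen U) (hUc : IsCompact U) (n : N) (s : SignTypeˣ) :
    (oddIndicator hU hUc).1 (OnePoint.some (pt (n, s))) =
      U.indicator 1 (pt (n, s)) - U.indicator 1 (pt (n, -s)) :=
  let hU' := isClopen_image_onePointCoe hU hUc
  congrArg₂ (· - ·) (charFn_image_coe_apply hU' _) (charFn_image_coe_apply hU' _)

theorem oddIndicator_apply_lim (hU : IsClopen U) (hUc : IsCompact U) (ξ : I) (s : SignTypeˣ) :
    (oddIndicator hU hUc).1 (OnePoint.some (lim (ξ, s))) =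
      U.indicator 1 (lim (ξ, s)) - U.indicator 1 (lim (ξ, -s)) :=
  let hU' := isClopen_image_onePointCoe hU hUc
  congrArg₂ (· - ·) (charFn_image_coe_apply hU' _) (charFn_image_coe_apply hU' _)

end Apply

end Double

section DoubleModel

open Mrowka

variable {I N : Type*} {h : I → N → SignType}

/-- The odd function `±1` at the two copies of the point `m` and zero elsewhere. -/
noncomputable def oddPoint (h : I → N → SignType) (m : N) : oddFunctions (doubleFlip h) :=
  oddIndicator (isClopen_singleton_pt (m, 1)) isCompact_singleton

/-- The odd function which restricts to the sign function `h ξ` on the first copy of the points. -/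
noncomputable def oddCone (hh : IsAlmostDisjoint fun ξ => (h ξ).support) (ξ : I) :
    oddFunctions (doubleFlip h) :=
  oddIndicator (isClopen_cone (isAlmostDisjoint_doubleFamily hh) (ξ, 1)) (isCompact_cone _)

theorem oddPoint_apply_pt [DecidableEq N] (m n : N) :
    (oddPoint h m).1 (OnePoint.some (pt (n, 1))) = (Pi.single m 1 : N → ℝ) n := by
  classical
  rw [oddPoint, oddIndicator_apply_pt]
  simp [Set.indicator_apply, Pi.single_apply, show (-1 : SignTypeˣ) ≠ 1 by decide]

theorem oddCone_apply_pt (hh : IsAlmostDisjoint fun ξ => (h ξ).support) (ξ : I) (n : N) :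
    (oddCone hh ξ).1 (OnePoint.some (pt (n, 1))) = (h ξ n : ℝ) := by
  classical
  rw [oddCone, oddIndicator_apply_pt]
  simp only [Set.indicator_apply, pt_mem_cone, mem_doubleFamily]
  rcases h ξ n with _ | _ | _ <;> simp

theorem oddCone_apply_lim [DecidableEq I] (hh : IsAlmostDisjoint fun ξ => (h ξ).support) (ξ η : I) :
    (oddCone hh ξ).1 (OnePoint.some (lim (η, 1))) = (Pi.single ξ 1 : I → ℝ) η := by
  classical
  rw [oddCone, oddIndicator_apply_lim]
  simp [Set.indicator_apply, Pi.single_apply, show (-1 : SignTypeˣ) ≠ 1 by decide]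

theorem norm_le_of_forall_abs_apply_pt_le [Infinite I] (hh : ∀ ξ, (h ξ).support.Infinite)
    {f : oddFunctions (doubleFlip h)} {C : ℝ} (hC : 0 ≤ C)
    (hf : ∀ n, |f.1 (OnePoint.some (pt (n, 1)))| ≤ C) : ‖f‖ ≤ C := by
  refine (ContinuousMap.norm_le f.1 hC).2 fun x => ?_
  refine (denseRange_coe_pt (infinite_doubleFamily hh)).induction_on x
    (isClosed_le (by fun_prop) (by fun_prop)) fun p => ?_
  rw [Real.norm_eq_abs, abs_apply_pt_of_mem_oddFunctions f.2]
  exact hf p.1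

theorem isCompact_setOf_le_abs_apply {f : C(OnePoint (Mrowka (doubleFamily h)), ℝ)}
    (hf : f ∈ oddFunctions (doubleFlip h)) {ε : ℝ} (hε : 0 < ε) :
    IsCompact {x : Mrowka (doubleFamily h) | ε ≤ |f x|} :=
  isCompact_preimage_coe_setOf_le_abs (apply_eq_zero_of_mem_oddFunctions hf rfl) hε

theorem finite_setOf_le_abs_apply_lim {f : C(OnePoint (Mrowka (doubleFamily h)), ℝ)}
    (hf : f ∈ oddFunctions (doubleFlip h)) {ε : ℝ} (hε : 0 < ε) :
    {ξ | ε ≤ |f (OnePoint.some (lim (ξ, 1)))|}.Finite :=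
  Set.Finite.preimage (f := fun ξ => (ξ, 1)) (Prod.mk_left_injective 1).injOn
    (finite_setOf_lim_mem (isCompact_setOf_le_abs_apply hf hε))

theorem finite_setOf_le_abs_apply_pt {f : C(OnePoint (Mrowka (doubleFamily h)), ℝ)}
    (hf : f ∈ oddFunctions (doubleFlip h)) {ε : ℝ} (hε : 0 < ε)
    (hlim : ∀ ξ, |f (OnePoint.some (lim (ξ, 1)))| < ε) :
    {n | ε ≤ |f (OnePoint.some (pt (n, 1)))|}.Finite := by
  have hfin : {x : Mrowka (doubleFamily h) | ε ≤ |f x|}.Finite :=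
    finite_of_forall_lim_notMem (isCompact_setOf_le_abs_apply hf hε) fun q hq =>
      ((abs_apply_lim_of_mem_oddFunctions hf q).trans_lt (hlim q.1)).not_ge hq
  refine Set.Finite.preimage (f := fun n => pt (n, 1)) (Function.Injective.injOn ?_) hfin
  exact fun m n hmn => by simpa using hmn

theorem sum_smul_oddPoint_apply_pt (u : N →₀ ℝ) (n : N) :
    (u.sum fun m c => c • oddPoint h m).1 (OnePoint.some (pt (n, 1))) = u n := by
  classical
  simp +contextual [Finsupp.sum, ContinuousMap.sum_apply, oddPoint_apply_pt, Pi.single_apply]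

theorem sum_smul_oddCone_apply_lim (hh : IsAlmostDisjoint fun ξ => (h ξ).support) (t : I →₀ ℚ)
    (η : I) :
    (t.sum fun ξ c => (c : ℝ) • oddCone hh ξ).1 (OnePoint.some (lim (η, 1))) = t η := by
  classical
  simp +contextual [Finsupp.sum, ContinuousMap.sum_apply, oddCone_apply_lim, Pi.single_apply]

theorem exists_norm_sub_sum_oddPoint_add_sum_oddCone_le [Infinite I]
    (hinf : ∀ ξ, (h ξ).support.Infinite) (hh : IsAlmostDisjoint fun ξ => (h ξ).support)
    (f : oddFunctions (doubleFlip h)) {ε : ℝ} (hε : 0 < ε) :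
    ∃ (u : N →₀ ℝ) (t : I →₀ ℚ), ‖f - ((u.sum fun m c => c • oddPoint h m) +
      t.sum fun ξ c => (c : ℝ) • oddCone hh ξ)‖ ≤ ε := by
  obtain ⟨t, ht⟩ := exists_finsupp_forall_abs_sub_lt Rat.denseRange_cast Rat.cast_zero hε
    (finite_setOf_le_abs_apply_lim f.2 hε)
  set g : oddFunctions (doubleFlip h) := f - t.sum fun ξ c => (c : ℝ) • oddCone hh ξ with hg
  have hlim (ξ) : |g.1 (OnePoint.some (lim (ξ, 1)))| < ε := by
    refine lt_of_eq_of_lt (congrArg _ ?_) (ht ξ)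
    exact congrArg (f.1 _ - ·) (sum_smul_oddCone_apply_lim hh t ξ)
  obtain ⟨u, hu⟩ := exists_finsupp_forall_abs_sub_lt denseRange_id rfl hε
    (finite_setOf_le_abs_apply_pt g.2 hε hlim)
  refine ⟨u, t, ?_⟩
  rw [add_comm, ← sub_sub, ← hg]
  refine norm_le_of_forall_abs_apply_pt_le hinf hε.le fun n => ?_
  refine le_of_eq_of_le (congrArg _ ?_) (hu n).le
  exact congrArg (g.1 _ - ·) (sum_smul_oddPoint_apply_pt u n)

/-- The odd functions on the double, with their restrictions to the first copy as coordinates. -/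
noncomputable def oddFunctionsModel [DecidableEq N] [Infinite I]
    (hinf : ∀ ξ, (h ξ).support.Infinite) (hh : IsAlmostDisjoint fun ξ => (h ξ).support) :
    SequenceModel h (oddFunctions (doubleFlip h)) where
  coord :=
    { toFun := fun f n => f.1 (OnePoint.some (pt (n, 1)))
      map_add' := fun _ _ => rfl
      map_smul' := fun _ _ => rfl }
  abs_coord_le f _ := f.1.norm_coe_le_norm _
  norm_le := norm_le_of_forall_abs_apply_pt_le hinf
  unitVec := oddPoint h
  coord_unitVec m := funext (oddPoint_apply_pt m)
  signVec := oddCone hh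
  coord_signVec := oddCone_apply_pt hh
  exists_norm_sub_le := exists_norm_sub_sum_oddPoint_add_sum_oddCone_le hinf hh

theorem oddFunctions_doubleFlip_ne_bot [Nonempty N] : oddFunctions (doubleFlip h) ≠ ⊥ := by
  classical
  obtain ⟨m⟩ := ‹Nonempty N›
  refine (Submodule.ne_bot_iff _).2 ⟨_, (oddPoint h m).2, fun h0 => ?_⟩
  have hm := oddPoint_apply_pt (h := h) m m
  simp [h0] at hm

end DoubleModel

/-- There are separable scattered compact Hausdorff spaces `K` and `L` with empty third
Cantor–Bendixson derivative, a continuous surjection `θ : L → K` and a closed subspace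
`X` of `C(L)` such that `C(L) = θ°[C(K)] ⊕ X`, both summands are 1-complemented, and
`X` is not a C-space. -/
theorem statement0 :
    ∃ (K : Type) (_ : TopologicalSpace K) (_ : CompactSpace K) (_ : T2Space K)
      (L : Type) (_ : TopologicalSpace L) (_ : CompactSpace L) (_ : T2Space L),
      TopologicalSpace.SeparableSpace K ∧ TopologicalSpace.SeparableSpace L ∧
      IsScatteredSpace K ∧ IsScatteredSpace L ∧
      derivedSet (derivedSet (derivedSet (Set.univ : Set K))) = ∅ ∧
      derivedSet (derivedSet (derivedSet (Set.univ : Set L))) = ∅ ∧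
      ∃ (θ : L → K) (hθ : Continuous θ), Function.Surjective θ ∧
        ∃ X : Submodule ℝ C(L, ℝ), IsClosed (X : Set C(L, ℝ)) ∧
          -- (i) `C(L)` is the internal direct sum of `θ°[C(K)]` and `X`
          (∀ f : C(L, ℝ), ∃! p : C(K, ℝ) × ↥X,
              f = ContinuousMap.comp p.1 ⟨θ, hθ⟩ + ↑p.2) ∧
          -- (ii) both `θ°[C(K)]` and `X` are 1-complemented in `C(L)`
          (∃ P : C(L, ℝ) →L[ℝ] C(L, ℝ), ‖P‖ = 1 ∧ (∀ f, P (P f) = P f) ∧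
              Set.range ⇑P = {f : C(L, ℝ) | ∃ g : C(K, ℝ), f = ContinuousMap.comp g ⟨θ, hθ⟩}) ∧
          (∃ Q : C(L, ℝ) →L[ℝ] C(L, ℝ), ‖Q‖ = 1 ∧ (∀ f, Q (Q f) = Q f) ∧
              Set.range ⇑Q = (X : Set C(L, ℝ))) ∧
          -- (iii) `X` is not a C-space
          ¬ IsCSpace ↥X := by
  obtain ⟨I, h, _, hinf, hh, hdiag⟩ := exists_isDiagonalizing
  have : TotallySeparatedSpace (Mrowka fun ξ => (h ξ).support) := Mrowka.totallySeparatedSpace hh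
  have : TotallySeparatedSpace (Mrowka (doubleFamily h)) :=
    Mrowka.totallySeparatedSpace (isAlmostDisjoint_doubleFamily hh)
  have hfib (x y) : doubleProj h x = doubleProj h y ↔ x = y ∨ x = doubleFlip h y :=
    doubleProj_eq_iff
  exact ⟨OnePoint (Mrowka fun ξ => (h ξ).support), inferInstance, inferInstance, inferInstance,
    OnePoint (Mrowka (doubleFamily h)), inferInstance, inferInstance, inferInstance,
    Mrowka.separableSpace_onePoint hinf,
    Mrowka.separableSpace_onePoint (infinite_doubleFamily hinf),
    isScatteredSpace_of_derivedSet_eq_empty Mrowka.derivedSet_derivedSet_derivedSet_onePoint,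
    isScatteredSpace_of_derivedSet_eq_empty Mrowka.derivedSet_derivedSet_derivedSet_onePoint,
    Mrowka.derivedSet_derivedSet_derivedSet_onePoint,
    Mrowka.derivedSet_derivedSet_derivedSet_onePoint,
    doubleProj h, (doubleProj h).continuous, surjective_doubleProj,
    oddFunctions (doubleFlip h), isClosed_oddFunctions,
    existsUnique_eq_comp_add involutive_doubleFlip surjective_doubleProj hfib,
    exists_projection_comp involutive_doubleFlip surjective_doubleProj hfib,
    exists_projection_oddFunctions involutive_doubleFlip oddFunctions_doubleFlip_ne_bot,
    (oddFunctionsModel hinf hh).not_isCSpace hdiag hh⟩
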